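/- arXiv:2501.11303 — 2 statements merged into one kernel-verified Lean document; each statement's English description precedes it below -/
import Mathlib

section
/- Let k=(k_1,…,k_r) be a composition and let α∈ℂ∖ℕ with ℜ(α)<1. Then ∫_0^1 Li_k(x)/(x(1−x)^α) dx = ζ((←k^∨)_+; 1−α). -/
open scoped BigOperators
open MeasureTheory

/-- Multiple polylogarithm `Li_k(z) = Σ_{n₁>⋯>n_r>0} z^{n₁}/(n₁^{k₁}⋯n_r^{k_r})`. -/
noncomputable def MPL (k : List ℕ) (z : ℝ) : ℝ :=
  if h : 0 < k.length then
    ∑' n : {n : Fin k.length → ℕ // StrictAnti n ∧ ∀ i, 0 < n i},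
      z ^ (n.1 ⟨0, h⟩) / ∏ i, (n.1 i : ℝ) ^ k.get i
  else 1

/-- Level-two multiple polylogarithm
`A(k;x) = 2^r Σ_{n₁>⋯>n_r>0, n_j ≡ r+1-j (mod 2)} x^{n₁}/(n₁^{k₁}⋯n_r^{k_r})`. -/
noncomputable def AFn (k : List ℕ) (x : ℝ) : ℝ :=
  if h : 0 < k.length then
    2 ^ k.length *
      ∑' n : {n : Fin k.length → ℕ //
          StrictAnti n ∧ (∀ i, 0 < n i) ∧ ∀ i, n i % 2 = (k.length - i.val) % 2},
        x ^ (n.1 ⟨0, h⟩) / ∏ i, (n.1 i : ℝ) ^ k.get i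
  else 1

/-- Multiple zeta value `ζ(k) = Σ_{n₁>⋯>n_r>0} ∏ 1/n_i^{k_i}`. -/
noncomputable def MZV (k : List ℕ) : ℝ :=
  ∑' n : {n : Fin k.length → ℕ // StrictAnti n ∧ ∀ i, 0 < n i},
    ∏ i, 1 / (n.1 i : ℝ) ^ k.get i

/-- Multiple zeta star value `ζ⋆(k) = Σ_{n₁≥⋯≥n_r>0} ∏ 1/n_i^{k_i}`. -/
noncomputable def MZSV (k : List ℕ) : ℝ :=
  ∑' n : {n : Fin k.length → ℕ // Antitone n ∧ ∀ i, 0 < n i},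
    ∏ i, 1 / (n.1 i : ℝ) ^ k.get i

/-- Multiple T-value `T(k) = 2^r Σ_{n₁>⋯>n_r>0, n_j ≡ r+1-j (mod 2)} ∏ 1/n_i^{k_i}`. -/
noncomputable def MTV (k : List ℕ) : ℝ :=
  2 ^ k.length *
    ∑' n : {n : Fin k.length → ℕ //
        StrictAnti n ∧ (∀ i, 0 < n i) ∧ ∀ i, n i % 2 = (k.length - i.val) % 2},
      ∏ i, 1 / (n.1 i : ℝ) ^ k.get i

/-- Hurwitz-type multiple zeta value `ζ(k;α) = Σ_{n₁>⋯>n_r>0} ∏ (n_i+α-1)^{-k_i}`. -/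
noncomputable def HMZV (k : List ℕ) (α : ℂ) : ℂ :=
  ∑' n : {n : Fin k.length → ℕ // StrictAnti n ∧ ∀ i, 0 < n i},
    ∏ i, ((n.1 i : ℂ) + α - 1) ^ (-(k.get i : ℤ))

/-- Hurwitz-type multiple zeta star value `ζ⋆(k;α) = Σ_{n₁≥⋯≥n_r>0} ∏ (n_i+α-1)^{-k_i}`. -/
noncomputable def HMZSV (k : List ℕ) (α : ℂ) : ℂ :=
  ∑' n : {n : Fin k.length → ℕ // Antitone n ∧ ∀ i, 0 < n i},
    ∏ i, ((n.1 i : ℂ) + α - 1) ^ (-(k.get i : ℤ))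

/-- Hurwitz-type multiple T-value
`T(k;α) = Σ_{m₁>⋯>m_r>0} 2^r ∏_i (2m_i - r - 2 + i + α)^{-k_i}` (1-indexed `i`). -/
noncomputable def HMTV (k : List ℕ) (α : ℂ) : ℂ :=
  ∑' n : {n : Fin k.length → ℕ // StrictAnti n ∧ ∀ i, 0 < n i},
    2 ^ k.length *
      ∏ i, (2 * (n.1 i : ℂ) - (k.length : ℂ) - 1 + (i.val : ℂ) + α) ^ (-(k.get i : ℤ))

/-- The boolean word (sequence of bits between consecutive units) of a composition. -/
def toWord : List ℕ → List Bool
  | [] => []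
  | [a] => List.replicate (a - 1) false
  | a :: b :: rest => List.replicate (a - 1) false ++ true :: toWord (b :: rest)

/-- The composition corresponding to a boolean word. -/
def fromWord : List Bool → List ℕ
  | [] => [1]
  | false :: w =>
    match fromWord w with
    | [] => [1]
    | a :: t => (a + 1) :: t
  | true :: w => 1 :: fromWord w

/-- Hoffman dual of a composition: swap commas and plus signs in
`k = (1+⋯+1, …, 1+⋯+1)`. -/
def HDual (k : List ℕ) : List ℕ := fromWord ((toWord k).map fun b => !b)

/-- `k₊ = (k₁+1, k₂, …, k_r)`. -/
def plusOne : List ℕ → List ℕ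
  | [] => []
  | a :: t => (a + 1) :: t

/-- `Refines l k` means the composition `k` can be obtained from `l`
by combining some consecutive parts of `l`, i.e. `l ⪰ k`. -/
inductive Refines : List ℕ → List ℕ → Prop
  | nil : Refines [] []
  | cons (b l k : List ℕ) : b ≠ [] → Refines l k → Refines (b ++ l) (b.sum :: k)

/-- Arakawa–Kaneko zeta function `ξ(s;k) = (1/Γ(s)) ∫_0^∞ t^{s-1}/(e^t-1) Li_k(1-e^{-t}) dt`. -/
noncomputable def xiAK (s : ℂ) (k : List ℕ) : ℂ :=
  (1 / Complex.Gamma s) *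
    ∫ t in Set.Ioi (0 : ℝ),
      (t : ℂ) ^ (s - 1) / ((Real.exp t : ℂ) - 1) * (MPL k (1 - Real.exp (-t)) : ℂ)

/-- Kaneko–Tsumura η-function `η(s;k) = (1/Γ(s)) ∫_0^∞ t^{s-1}/(1-e^t) Li_k(1-e^{t}) dt`. -/
noncomputable def etaKT (s : ℂ) (k : List ℕ) : ℂ :=
  (1 / Complex.Gamma s) *
    ∫ t in Set.Ioi (0 : ℝ),
      (t : ℂ) ^ (s - 1) / (1 - (Real.exp t : ℂ)) * (MPL k (1 - Real.exp t) : ℂ)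

/-- Kaneko–Tsumura ψ-function `ψ(s;k) = (1/Γ(s)) ∫_0^∞ t^{s-1} A(k; tanh(t/2))/sinh(t) dt`. -/
noncomputable def psiKT (s : ℂ) (k : List ℕ) : ℂ :=
  (1 / Complex.Gamma s) *
    ∫ t in Set.Ioi (0 : ℝ),
      (t : ℂ) ^ (s - 1) * ((AFn k (Real.tanh (t / 2)) / Real.sinh t : ℝ) : ℂ)

/-- Riemann zeta value `ζ(a) = Σ_{n>0} 1/n^a`. -/
noncomputable def zeta1 (a : ℕ) : ℝ := ∑' n : {n : ℕ // 0 < n}, 1 / (n.1 : ℝ) ^ a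

/-- Double zeta value `ζ(a,b) = Σ_{n₁>n₂>0} 1/(n₁^a n₂^b)`. -/
noncomputable def zeta2 (a b : ℕ) : ℝ :=
  ∑' p : {p : ℕ × ℕ // p.2 < p.1 ∧ 0 < p.2}, 1 / ((p.1.1 : ℝ) ^ a * (p.1.2 : ℝ) ^ b)

/-- Single T-value `T(a) = 2 Σ_{n>0 odd} 1/n^a`. -/
noncomputable def T1 (a : ℕ) : ℝ := 2 * ∑' n : {n : ℕ // 0 < n ∧ n % 2 = 1}, 1 / (n.1 : ℝ) ^ a

/-- Double T-value `T(a,b) = 4 Σ_{n₁>n₂>0, n₁ even, n₂ odd} 1/(n₁^a n₂^b)`. -/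
noncomputable def T2 (a b : ℕ) : ℝ :=
  4 * ∑' p : {p : ℕ × ℕ // p.2 < p.1 ∧ 0 < p.2 ∧ p.1 % 2 = 0 ∧ p.2 % 2 = 1},
    1 / ((p.1.1 : ℝ) ^ a * (p.1.2 : ℝ) ^ b)


open Filter Topology
open scoped NNReal ENNReal

/-! ### Transport operators and the connector -/

def opA {K : Type*} [CommSemiring K] (e : ℕ → K) (f : ℕ → K) (n : ℕ) : K := e n * f n

def opB {K : Type*} [CommSemiring K] (e : ℕ → K) (f : ℕ → K) (n : ℕ) : K :=
  e n * ∑ j ∈ Finset.range n, f j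

def del0 {K : Type*} [CommSemiring K] (n : ℕ) : K := if n = 0 then 1 else 0

def Wd {K : Type*} [CommSemiring K] (e : ℕ → K) : List Bool → ℕ → K
  | [] => opB e del0
  | false :: w => opA e (Wd e w)
  | true :: w => opB e (Wd e w)

def Cc {K : Type*} [CommSemiring K] (e : ℕ → K) (n m : ℕ) : K :=
  ∏ i ∈ Finset.range n, (((i + 1 : ℕ) : K) * e (m + i + 1))

lemma Wd_zero {K : Type*} [CommSemiring K] (e : ℕ → K) (w : List Bool) : Wd e w 0 = 0 := by
  induction w with
  | nil => simp [Wd, opB]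
  | cons b w ih => cases b <;> simp [Wd, opB, opA, ih]

lemma Cc_step1 {K : Type*} [CommSemiring K] (e i : ℕ → K)
    (H : ∀ m, 1 ≤ m → ∀ a : ℕ, e m = e (m + a) * (a * e m + 1))
    (hi : ∀ n : ℕ, 1 ≤ n → (n : K) * i n = 1) (n m : ℕ) (hm : 1 ≤ m) :
    i (n + 1) * Cc e (n + 1) m + e m * Cc e (n + 1) m = e m * Cc e n m := by
  have h1 : Cc e (n + 1) m = Cc e n m * (((n + 1 : ℕ) : K) * e (m + (n + 1))) := by
    rw [Cc, Finset.prod_range_succ]; rfl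
  have h2 := H m hm (n + 1)
  have h3 := hi (n + 1) (by omega)
  calc _ = Cc e n m * e (m + (n + 1)) *
        (((n + 1 : ℕ) : K) * i (n + 1) + ((n + 1 : ℕ) : K) * e m) := by rw [h1]; ring
    _ = Cc e n m * (e (m + (n + 1)) * (((n + 1 : ℕ) : K) * e m + 1)) := by rw [h3]; ring
    _ = _ := by rw [← h2]; ring

lemma Cc_step2 {K : Type*} [CommSemiring K] (e i : ℕ → K)
    (H : ∀ m, 1 ≤ m → ∀ a : ℕ, e m = e (m + a) * (a * e m + 1))
    (hi : ∀ n : ℕ, 1 ≤ n → (n : K) * i n = 1) (n m : ℕ) (hn : 1 ≤ n) :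
    e (m + 1) * Cc e n (m + 1) + i n * Cc e n (m + 1) = i n * Cc e n m := by
  obtain ⟨k, rfl⟩ : ∃ k, n = k + 1 := ⟨n - 1, by omega⟩
  set P : K := (∏ i ∈ Finset.range (k + 1), ((i + 1 : ℕ) : K)) *
    ∏ i ∈ Finset.range k, e (m + 1 + i + 1) with hP
  have h1 : Cc e (k + 1) m = P * e (m + 1) := by
    rw [Cc, Finset.prod_mul_distrib, hP, mul_assoc]
    congr 1
    rw [Finset.prod_range_succ']
    congr 1
    refine Finset.prod_congr rfl fun x _ => ?_
    congr 1; ring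
  have h1' : Cc e (k + 1) (m + 1) = P * e (m + 1 + (k + 1)) := by
    rw [Cc, Finset.prod_mul_distrib, hP, mul_assoc]
    congr 1
    rw [Finset.prod_range_succ]
    rfl
  have h2 := H (m + 1) (by omega) (k + 1)
  have h3 := hi (k + 1) (by omega)
  rw [h1, h1']
  symm
  calc i (k + 1) * (P * e (m + 1)) = i (k + 1) * P *
        (e (m + 1 + (k + 1)) * (((k + 1 : ℕ) : K) * e (m + 1) + 1)) := by rw [← h2]; ring
    _ = P * e (m + 1 + (k + 1)) * e (m + 1) * (((k + 1 : ℕ) : K) * i (k + 1))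
        + i (k + 1) * P * e (m + 1 + (k + 1)) := by ring
    _ = _ := by rw [h3]; ring

lemma Cc_sum1 {K : Type*} [CommSemiring K] (e i : ℕ → K)
    (H : ∀ m, 1 ≤ m → ∀ a : ℕ, e m = e (m + a) * (a * e m + 1))
    (hi : ∀ n : ℕ, 1 ≤ n → (n : K) * i n = 1) (j m : ℕ) (hm : 1 ≤ m) (N : ℕ) :
    ∑ t ∈ Finset.range N, i (t + (j + 1)) * Cc e (t + (j + 1)) m + e m * Cc e (N + j) m
      = e m * Cc e j m := by
  induction N with
  | zero => simp
  | succ N ih =>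
    rw [Finset.sum_range_succ, ← ih, add_assoc]
    congr 1
    have := Cc_step1 e i H hi (N + j) m hm
    rw [← this]
    congr 3 <;> ring_nf

lemma Cc_sum2 {K : Type*} [CommSemiring K] (e i : ℕ → K)
    (H : ∀ m, 1 ≤ m → ∀ a : ℕ, e m = e (m + a) * (a * e m + 1))
    (hi : ∀ n : ℕ, 1 ≤ n → (n : K) * i n = 1) (n j : ℕ) (hn : 1 ≤ n) (N : ℕ) :
    ∑ t ∈ Finset.range N, e (t + (j + 1)) * Cc e n (t + (j + 1)) + i n * Cc e n (N + j)
      = i n * Cc e n j := by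
  induction N with
  | zero => simp
  | succ N ih =>
    rw [Finset.sum_range_succ, ← ih, add_assoc]
    congr 1
    have := Cc_step2 e i H hi n (N + j) hn
    rw [← this]
    congr 3 <;> ring_nf

/-! ### Concrete weights -/

noncomputable def eN (b : ℝ) (m : ℕ) : ℝ≥0 := Real.toNNReal ((m - b)⁻¹)
noncomputable def eC (α : ℂ) (m : ℕ) : ℂ := ((m : ℂ) - α)⁻¹

lemma eN_coe {b : ℝ} (hb : b < 1) {m : ℕ} (hm : 1 ≤ m) : (eN b m : ℝ) = (m - b)⁻¹ := by
  have : (1 : ℝ) ≤ m := by exact_mod_cast hm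
  exact Real.coe_toNNReal _ (inv_nonneg.2 (by linarith))

lemma eN_H {b : ℝ} (hb : b < 1) : ∀ m, 1 ≤ m → ∀ a : ℕ,
    eN b m = eN b (m + a) * (a * eN b m + 1) := by
  intro m hm a
  have h1 : (1 : ℝ) ≤ m := by exact_mod_cast hm
  have h2 : (0 : ℝ) ≤ a := by positivity
  rw [← NNReal.coe_inj]
  push_cast
  rw [eN_coe hb hm, eN_coe hb (by omega)]
  push_cast
  have : (m : ℝ) - b ≠ 0 := by linarith
  have : (m : ℝ) + a - b ≠ 0 := by linarith
  field_simp
  ring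

lemma eC_H {α : ℂ} (hb : α.re < 1) : ∀ m, 1 ≤ m → ∀ a : ℕ,
    eC α m = eC α (m + a) * (a * eC α m + 1) := by
  intro m hm a
  have h1 : (1 : ℝ) ≤ m := by exact_mod_cast hm
  have h2 : (0 : ℝ) ≤ a := by positivity
  have : (m : ℂ) - α ≠ 0 := fun h => by
    have := congrArg Complex.re h
    simp at this; linarith
  have : (m : ℂ) + a - α ≠ 0 := fun h => by
    have := congrArg Complex.re h
    simp at this; linarith
  simp only [eC]
  push_cast
  field_simp
  ring

lemma eC_le {α : ℂ} (hb : α.re < 1) {m : ℕ} (hm : 1 ≤ m) : ‖eC α m‖₊ ≤ eN α.re m := by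
  rw [← NNReal.coe_le_coe, eN_coe hb hm, coe_nnnorm, eC, norm_inv]
  have h1 : (1 : ℝ) ≤ m := by exact_mod_cast hm
  apply inv_anti₀ (by linarith)
  have := Complex.re_le_norm ((m : ℂ) - α)
  simpa using this

lemma Cc_le {α : ℂ} (hb : α.re < 1) (n m : ℕ) :
    ‖Cc (eC α) n m‖₊ ≤ Cc (eN α.re) n m := by
  rw [Cc, Cc, nnnorm_prod]
  refine Finset.prod_le_prod' fun i _ => ?_
  rw [nnnorm_mul]
  gcongr
  · simp [-Nat.cast_add]
  · exact eC_le hb (by omega)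

lemma Cc_bound {b : ℝ} (hb : b < 1) (m : ℕ) (hm : 1 ≤ m) (N : ℕ) :
    ((Cc (eN b) N m : ℝ≥0) : ℝ) * (1 + (m - b) * ∑ i ∈ Finset.range N, (1 / ((i : ℝ) + 1))) ≤ 1 := by
  have h1 : (1 : ℝ) ≤ m := by exact_mod_cast hm
  have hd : (0 : ℝ) < m - b := by linarith
  induction N with
  | zero => simp [Cc]
  | succ N ih =>
    refine le_trans ?_ ih
    rw [Cc, Finset.prod_range_succ, ← Cc, Finset.sum_range_succ]
    push_cast
    rw [eN_coe hb (by omega), mul_assoc]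
    gcongr
    set S := ∑ i ∈ Finset.range N, (1 / ((i : ℝ) + 1))
    have hS : 0 ≤ S := Finset.sum_nonneg fun i _ => by positivity
    push_cast
    have hN : (0 : ℝ) ≤ N := by positivity
    have : (0 : ℝ) < m + N + 1 - b := by linarith
    rw [show ((N : ℝ) + 1) * (m + N + 1 - b)⁻¹ * (1 + (m - b) * (S + 1 / (N + 1)))
      = ((1 + (m - b) * S) * (N + 1) + (m - b)) / (m + N + 1 - b) by field_simp; ring]
    rw [div_le_iff₀ this]
    nlinarith [mul_nonneg (mul_nonneg hd.le hd.le) hS]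

lemma Cc_tendsto1 {b : ℝ} (hb : b < 1) (m : ℕ) (hm : 1 ≤ m) :
    Tendsto (fun N => Cc (eN b) N m) atTop (𝓝 0) := by
  have h1 : (1 : ℝ) ≤ m := by exact_mod_cast hm
  have hd : (0 : ℝ) < m - b := by linarith
  rw [← NNReal.tendsto_coe]
  have h := Real.tendsto_sum_range_one_div_nat_succ_atTop
  have h2 : Tendsto (fun N => (1 + (m - b) * ∑ i ∈ Finset.range N, (1 / ((i : ℝ) + 1)))⁻¹)
      atTop (𝓝 0) :=
    tendsto_inv_atTop_zero.comp (tendsto_atTop_add_const_left _ _ (h.const_mul_atTop hd))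
  refine squeeze_zero (fun _ => NNReal.coe_nonneg _) (fun N => ?_) h2
  have hS : 0 ≤ ∑ i ∈ Finset.range N, (1 / ((i : ℝ) + 1)) :=
    Finset.sum_nonneg fun i _ => by positivity
  rw [← one_div, le_div_iff₀ (by positivity)]
  exact Cc_bound hb m hm N

lemma eN_tendsto {b : ℝ} : Tendsto (eN b) atTop (𝓝 0) := by
  have : Tendsto (fun m : ℕ => ((m : ℝ) - b)⁻¹) atTop (𝓝 0) :=
    tendsto_inv_atTop_zero.comp (tendsto_atTop_add_const_right _ _ tendsto_natCast_atTop_atTop)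
  have h := (continuous_real_toNNReal.tendsto 0).comp this
  rw [Real.toNNReal_zero] at h
  exact h

lemma Cc_tendsto2 {b : ℝ} (n : ℕ) (hn : 1 ≤ n) :
    Tendsto (fun M => Cc (eN b) n M) atTop (𝓝 0) := by
  have : Tendsto (fun M => Cc (eN b) n M) atTop
      (𝓝 (∏ i ∈ Finset.range n, (((i + 1 : ℕ) : ℝ≥0) * 0))) := by
    refine tendsto_finsetProd _ fun i _ => ?_
    refine Tendsto.const_mul _ ?_
    have := (eN_tendsto (b := b)).comp (tendsto_add_atTop_nat (i + 1))
    exact this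
  have h0 : ∏ i ∈ Finset.range n, (((i + 1 : ℕ) : ℝ≥0) * 0) = 0 :=
    Finset.prod_eq_zero (i := 0) (by simp; omega) (by simp)
  rwa [h0] at this

lemma hasSum_shift {K : Type*} [AddCommMonoid K] [TopologicalSpace K] (F : ℕ → K) (j : ℕ) (s : K)
    (h : HasSum (fun t => F (t + (j + 1))) s) :
    HasSum (fun n => if j < n then F n else 0) s := by
  have hinj : Function.Injective (fun t : ℕ => t + (j + 1)) := fun a b h => by simpa using h
  rw [← hinj.hasSum_iff]
  · convert h using 2 with t
    simp; intro h; omega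
  · intro x hx
    rw [if_neg]
    intro hlt
    exact hx ⟨x - (j + 1), by simp; omega⟩

lemma invN : ∀ n : ℕ, 1 ≤ n → (n : ℝ≥0) * (n : ℝ≥0)⁻¹ = 1 := fun n hn =>
  mul_inv_cancel₀ (by norm_cast; omega)
lemma invC : ∀ n : ℕ, 1 ≤ n → (n : ℂ) * (n : ℂ)⁻¹ = 1 := fun n hn =>
  mul_inv_cancel₀ (by norm_cast; omega)

lemma R1N {b : ℝ} (hb : b < 1) (j m : ℕ) (hm : 1 ≤ m) :
    HasSum (fun n => if j < n then (n : ℝ≥0)⁻¹ * Cc (eN b) n m else 0)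
      (eN b m * Cc (eN b) j m) := by
  apply hasSum_shift (fun n => (n : ℝ≥0)⁻¹ * Cc (eN b) n m)
  rw [NNReal.hasSum_iff_tendsto_nat]
  have h : Tendsto (fun N => eN b m * Cc (eN b) j m - eN b m * Cc (eN b) (N + j) m) atTop
      (𝓝 (eN b m * Cc (eN b) j m - eN b m * 0)) :=
    tendsto_const_nhds.sub (((Cc_tendsto1 hb m hm).comp (tendsto_add_atTop_nat j)).const_mul _)
  rw [mul_zero, tsub_zero] at h
  refine h.congr fun N => ?_
  exact (eq_tsub_of_add_eq (Cc_sum1 (eN b) (fun n => (n : ℝ≥0)⁻¹) (eN_H hb) invN j m hm N)).symm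

lemma R2N {b : ℝ} (hb : b < 1) (n j : ℕ) (hn : 1 ≤ n) :
    HasSum (fun m => if j < m then eN b m * Cc (eN b) n m else 0)
      ((n : ℝ≥0)⁻¹ * Cc (eN b) n j) := by
  apply hasSum_shift (fun m => eN b m * Cc (eN b) n m)
  rw [NNReal.hasSum_iff_tendsto_nat]
  have h : Tendsto (fun N => (n : ℝ≥0)⁻¹ * Cc (eN b) n j - (n : ℝ≥0)⁻¹ * Cc (eN b) n (N + j)) atTop
      (𝓝 ((n : ℝ≥0)⁻¹ * Cc (eN b) n j - (n : ℝ≥0)⁻¹ * 0)) :=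
    tendsto_const_nhds.sub (((Cc_tendsto2 n hn).comp (tendsto_add_atTop_nat j)).const_mul _)
  rw [mul_zero, tsub_zero] at h
  refine h.congr fun N => ?_
  exact (eq_tsub_of_add_eq (Cc_sum2 (eN b) (fun n => (n : ℝ≥0)⁻¹) (eN_H hb) invN n j hn N)).symm

lemma summable_of_nn {ι : Type*} (f : ι → ℂ) (g : ι → ℝ≥0) (hg : Summable g)
    (h : ∀ i, ‖f i‖₊ ≤ g i) : Summable f :=
  Summable.of_norm_bounded (g := fun i => (g i : ℝ)) (NNReal.summable_coe.2 hg) (fun i => h i)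

lemma tendsto_of_nn (f : ℕ → ℂ) (g : ℕ → ℝ≥0) (hg : Tendsto g atTop (𝓝 0))
    (h : ∀ i, ‖f i‖₊ ≤ g i) : Tendsto f atTop (𝓝 0) :=
  squeeze_zero_norm (fun i => h i) (NNReal.tendsto_coe.2 hg)

lemma R1C {α : ℂ} (hb : α.re < 1) (j m : ℕ) (hm : 1 ≤ m) :
    HasSum (fun n => if j < n then (n : ℂ)⁻¹ * Cc (eC α) n m else 0)
      (eC α m * Cc (eC α) j m) := by
  have hs : Summable (fun n => if j < n then (n : ℂ)⁻¹ * Cc (eC α) n m else 0) := by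
    refine summable_of_nn _ _ (R1N hb j m hm).summable fun n => ?_
    split_ifs
    · rw [nnnorm_mul]; gcongr
      · simp
      · exact Cc_le hb _ _
    · simp
  have h0 := hs
  apply hasSum_shift (fun n => (n : ℂ)⁻¹ * Cc (eC α) n m)
  have hs' : Summable (fun t : ℕ => ((t + (j + 1) : ℕ) : ℂ)⁻¹ * Cc (eC α) (t + (j + 1)) m) := by
    refine ((summable_nat_add_iff (j + 1)).2 hs).congr fun t => ?_
    rw [if_pos (by omega)]
  rw [hs'.hasSum_iff_tendsto_nat]
  have h : Tendsto (fun N => eC α m * Cc (eC α) j m - eC α m * Cc (eC α) (N + j) m) atTop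
      (𝓝 (eC α m * Cc (eC α) j m - eC α m * 0)) :=
    tendsto_const_nhds.sub (((tendsto_of_nn _ _ (Cc_tendsto1 hb m hm)
      (fun N => Cc_le hb N m)).comp (tendsto_add_atTop_nat j)).const_mul _)
  rw [mul_zero, sub_zero] at h
  refine h.congr fun N => ?_
  exact (eq_sub_of_add_eq (Cc_sum1 (eC α) (fun n => (n : ℂ)⁻¹) (eC_H hb) invC j m hm N)).symm

lemma R2C {α : ℂ} (hb : α.re < 1) (n j : ℕ) (hn : 1 ≤ n) :
    HasSum (fun m => if j < m then eC α m * Cc (eC α) n m else 0)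
      ((n : ℂ)⁻¹ * Cc (eC α) n j) := by
  have hs : Summable (fun m => if j < m then eC α m * Cc (eC α) n m else 0) := by
    refine summable_of_nn _ _ (R2N hb n j hn).summable fun m => ?_
    split_ifs
    · rw [nnnorm_mul]; gcongr
      · exact eC_le hb (by omega)
      · exact Cc_le hb _ _
    · simp
  apply hasSum_shift (fun m => eC α m * Cc (eC α) n m)
  have hs' : Summable (fun t : ℕ => eC α (t + (j + 1)) * Cc (eC α) n (t + (j + 1))) := by
    refine ((summable_nat_add_iff (j + 1)).2 hs).congr fun t => ?_
    rw [if_pos (by omega)]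
  rw [hs'.hasSum_iff_tendsto_nat]
  have h : Tendsto (fun N => (n : ℂ)⁻¹ * Cc (eC α) n j - (n : ℂ)⁻¹ * Cc (eC α) n (N + j)) atTop
      (𝓝 ((n : ℂ)⁻¹ * Cc (eC α) n j - (n : ℂ)⁻¹ * 0)) :=
    tendsto_const_nhds.sub (((tendsto_of_nn _ _ (Cc_tendsto2 n hn)
      (fun N => Cc_le hb n N)).comp (tendsto_add_atTop_nat j)).const_mul _)
  rw [mul_zero, sub_zero] at h
  refine h.congr fun N => ?_
  exact (eq_sub_of_add_eq (Cc_sum2 (eC α) (fun n => (n : ℂ)⁻¹) (eC_H hb) invC n j hn N)).symm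

/-! ### Connected sums -/

noncomputable def iN (n : ℕ) : ℝ≥0 := (n : ℝ≥0)⁻¹
noncomputable def iC (n : ℕ) : ℂ := (n : ℂ)⁻¹

noncomputable def ZN (b : ℝ) (f g : ℕ → ℝ≥0) : ℝ≥0∞ :=
  ∑' p : ℕ × ℕ, ((f p.1 * g p.2 * Cc (eN b) p.1 p.2 : ℝ≥0) : ℝ≥0∞)

noncomputable def ZC (α : ℂ) (f g : ℕ → ℂ) : ℂ :=
  ∑' p : ℕ × ℕ, f p.1 * g p.2 * Cc (eC α) p.1 p.2

lemma swapN (T : ℕ → ℕ → ℕ → ℝ≥0) (A B : ℕ → ℕ → ℝ≥0)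
    (hA : ∀ x y, HasSum (fun j => T x y j) (A x y))
    (hB : ∀ j y, HasSum (fun x => T x y j) (B j y)) :
    ∑' p : ℕ × ℕ, (A p.1 p.2 : ℝ≥0∞) = ∑' p : ℕ × ℕ, (B p.1 p.2 : ℝ≥0∞) := by
  rw [ENNReal.tsum_prod (f := fun x y => (A x y : ℝ≥0∞)),
    ENNReal.tsum_prod (f := fun x y => (B x y : ℝ≥0∞))]
  have h1 : ∀ x y, (A x y : ℝ≥0∞) = ∑' j, (T x y j : ℝ≥0∞) := fun x y =>
    ((ENNReal.hasSum_coe.2 (hA x y)).tsum_eq).symm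
  have h2 : ∀ x y, (B x y : ℝ≥0∞) = ∑' j, (T j y x : ℝ≥0∞) := fun x y =>
    ((ENNReal.hasSum_coe.2 (hB x y)).tsum_eq).symm
  simp_rw [h1, h2]
  rw [ENNReal.tsum_comm]
  conv_rhs => rw [ENNReal.tsum_comm]
  refine tsum_congr fun y => ?_
  rw [ENNReal.tsum_comm]

lemma swapC (T : ℕ → ℕ → ℕ → ℂ) (A B : ℕ → ℕ → ℂ) (T' : ℕ → ℕ → ℕ → ℝ≥0) (A' : ℕ → ℕ → ℝ≥0)
    (hA : ∀ x y, HasSum (fun j => T x y j) (A x y))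
    (hB : ∀ j y, HasSum (fun x => T x y j) (B j y))
    (hA' : ∀ x y, HasSum (fun j => T' x y j) (A' x y))
    (hT : ∀ x y j, ‖T x y j‖₊ ≤ T' x y j)
    (hfin : ∑' p : ℕ × ℕ, (A' p.1 p.2 : ℝ≥0∞) ≠ ⊤) :
    ∑' p : ℕ × ℕ, A p.1 p.2 = ∑' p : ℕ × ℕ, B p.1 p.2 := by
  have hs : Summable (fun q : (ℕ × ℕ) × ℕ => T q.1.1 q.1.2 q.2) := by
    refine summable_of_nn _ (fun q : (ℕ × ℕ) × ℕ => T' q.1.1 q.1.2 q.2) ?_ fun q => hT _ _ _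
    rw [← ENNReal.tsum_coe_ne_top_iff_summable]
    rw [ENNReal.tsum_prod (f := fun (p : ℕ × ℕ) j => (T' p.1 p.2 j : ℝ≥0∞))]
    convert hfin using 3 with p
    exact (ENNReal.hasSum_coe.2 (hA' p.1 p.2)).tsum_eq
  have e1 : ∑' p : ℕ × ℕ, A p.1 p.2 = ∑' q : (ℕ × ℕ) × ℕ, T q.1.1 q.1.2 q.2 := by
    rw [hs.tsum_prod]
    exact tsum_congr fun p => (hA p.1 p.2).tsum_eq.symm
  let E : (ℕ × ℕ) × ℕ ≃ (ℕ × ℕ) × ℕ :=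
    { toFun := fun q => ((q.2, q.1.2), q.1.1)
      invFun := fun q => ((q.2, q.1.2), q.1.1)
      left_inv := fun q => rfl
      right_inv := fun q => rfl }
  have hs2 : Summable (fun q : (ℕ × ℕ) × ℕ => T q.2 q.1.2 q.1.1) := (E.summable_iff.2 hs)
  rw [e1, ← E.tsum_eq]
  change ∑' q : (ℕ × ℕ) × ℕ, T q.2 q.1.2 q.1.1 = _
  rw [hs2.tsum_prod]
  exact tsum_congr fun p => (hB p.1 p.2).tsum_eq

lemma hasSum_ltRange {K : Type*} [CommSemiring K] [TopologicalSpace K] (f : ℕ → K) (n : ℕ) (c : K) :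
    HasSum (fun j => if j < n then f j * c else 0) ((∑ j ∈ Finset.range n, f j) * c) := by
  rw [Finset.sum_mul]
  have : ∑ j ∈ Finset.range n, f j * c = ∑ j ∈ Finset.range n, if j < n then f j * c else 0 :=
    Finset.sum_congr rfl fun j hj => by rw [if_pos (Finset.mem_range.1 hj)]
  rw [this]
  exact hasSum_sum_of_ne_finset_zero fun j hj => by
    rw [if_neg (by simpa using hj)]

/-- inner sums for the first transport -/
lemma innerB {K : Type*} [CommSemiring K] [TopologicalSpace K] [IsTopologicalSemiring K]
    (e i : ℕ → K)
    (R1 : ∀ j m, 1 ≤ m → HasSum (fun n => if j < n then i n * Cc e n m else 0) (e m * Cc e j m))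
    (f g : ℕ → K) (hg : g 0 = 0) :
    (∀ n m, HasSum (fun j => if j < n then f j * (i n * g m * Cc e n m) else 0)
      (opB i f n * g m * Cc e n m)) ∧
    (∀ j m, HasSum (fun n => if j < n then f j * (i n * g m * Cc e n m) else 0)
      (f j * opA e g m * Cc e j m)) := by
  constructor
  · intro n m
    convert hasSum_ltRange f n (i n * g m * Cc e n m) using 1
    simp only [opB]; ring
  · intro j m
    rcases Nat.eq_zero_or_pos m with rfl | hm
    · simp [hg, opA, hasSum_zero]
    · have h : HasSum (fun n => f j * g m * (if j < n then i n * Cc e n m else 0))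
          (f j * g m * (e m * Cc e j m)) := (R1 j m hm).mul_left (f j * g m)
      convert h using 1
      · ext n; split_ifs <;> ring
      · simp only [opA]; ring

lemma innerA {K : Type*} [CommSemiring K] [TopologicalSpace K] [IsTopologicalSemiring K]
    (e i : ℕ → K)
    (R2 : ∀ n j, 1 ≤ n → HasSum (fun m => if j < m then e m * Cc e n m else 0) (i n * Cc e n j))
    (f g : ℕ → K) (hf : f 0 = 0) :
    (∀ m n, HasSum (fun j => if j < m then g j * (e m * f n * Cc e n m) else 0)
      (f n * opB e g m * Cc e n m)) ∧
    (∀ j n, HasSum (fun m => if j < m then g j * (e m * f n * Cc e n m) else 0)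
      (opA i f n * g j * Cc e n j)) := by
  constructor
  · intro m n
    convert hasSum_ltRange g m (e m * f n * Cc e n m) using 1
    simp only [opB]; ring
  · intro j n
    rcases Nat.eq_zero_or_pos n with rfl | hn
    · simp [hf, opA, hasSum_zero]
    · have h : HasSum (fun m => g j * f n * (if j < m then e m * Cc e n m else 0))
          (g j * f n * (i n * Cc e n j)) := (R2 n j hn).mul_left (g j * f n)
      convert h using 1
      · ext m; split_ifs <;> ring
      · simp only [opA]; ring

lemma trBN {b : ℝ} (hb : b < 1) (f g : ℕ → ℝ≥0) (hg : g 0 = 0) :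
    ZN b (opB iN f) g = ZN b f (opA (eN b) g) := by
  obtain ⟨h1, h2⟩ := innerB (eN b) iN (fun j m hm => R1N hb j m hm) f g hg
  exact swapN _ (fun n m => opB iN f n * g m * Cc (eN b) n m)
    (fun n m => f n * opA (eN b) g m * Cc (eN b) n m) h1 h2

lemma trBC {α : ℂ} (hb : α.re < 1) (f g : ℕ → ℂ) (f' g' : ℕ → ℝ≥0) (hg : g 0 = 0)
    (hg' : g' 0 = 0)
    (hff : ∀ n, ‖f n‖₊ ≤ f' n) (hgg : ∀ n, ‖g n‖₊ ≤ g' n)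
    (hfin : ZN α.re (opB iN f') g' ≠ ⊤) :
    ZC α (opB iC f) g = ZC α f (opA (eC α) g) := by
  obtain ⟨h1, h2⟩ := innerB (eC α) iC (fun j m hm => R1C hb j m hm) f g hg
  obtain ⟨h1', h2'⟩ := innerB (eN α.re) iN (fun j m hm => R1N hb j m hm) f' g' hg'
  refine swapC _ (fun n m => opB iC f n * g m * Cc (eC α) n m)
    (fun n m => f n * opA (eC α) g m * Cc (eC α) n m) _
    (fun n m => opB iN f' n * g' m * Cc (eN α.re) n m) h1 h2 h1' ?_ hfin
  intro n m j
  split_ifs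
  · simp only [nnnorm_mul]
    gcongr
    · exact hff _
    · simp [iC, iN]
    · exact hgg _
    · exact Cc_le hb _ _
  · simp

lemma tsum_prod_swap {K : Type*} [AddCommMonoid K] [TopologicalSpace K] (F : ℕ → ℕ → K) :
    ∑' p : ℕ × ℕ, F p.1 p.2 = ∑' p : ℕ × ℕ, F p.2 p.1 :=
  ((Equiv.prodComm ℕ ℕ).tsum_eq (fun p : ℕ × ℕ => F p.1 p.2)).symm

lemma trAN {b : ℝ} (hb : b < 1) (f g : ℕ → ℝ≥0) (hf : f 0 = 0) :
    ZN b (opA iN f) g = ZN b f (opB (eN b) g) := by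
  obtain ⟨h1, h2⟩ := innerA (eN b) iN (fun j m hm => R2N hb j m hm) f g hf
  have := swapN _ (fun m n => f n * opB (eN b) g m * Cc (eN b) n m)
    (fun j n => opA iN f n * g j * Cc (eN b) n j) h1 h2
  rw [ZN, ZN]
  rw [tsum_prod_swap (fun n m => ((opA iN f n * g m * Cc (eN b) n m : ℝ≥0) : ℝ≥0∞)),
    tsum_prod_swap (fun n m => ((f n * opB (eN b) g m * Cc (eN b) n m : ℝ≥0) : ℝ≥0∞))]
  exact this.symm

lemma trAC {α : ℂ} (hb : α.re < 1) (f g : ℕ → ℂ) (f' g' : ℕ → ℝ≥0) (hf : f 0 = 0)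
    (hf' : f' 0 = 0)
    (hff : ∀ n, ‖f n‖₊ ≤ f' n) (hgg : ∀ n, ‖g n‖₊ ≤ g' n)
    (hfin : ZN α.re f' (opB (eN α.re) g') ≠ ⊤) :
    ZC α (opA iC f) g = ZC α f (opB (eC α) g) := by
  obtain ⟨h1, h2⟩ := innerA (eC α) iC (fun j m hm => R2C hb j m hm) f g hf
  obtain ⟨h1', h2'⟩ := innerA (eN α.re) iN (fun j m hm => R2N hb j m hm) f' g' hf'
  have := swapC _ (fun m n => f n * opB (eC α) g m * Cc (eC α) n m)
    (fun j n => opA iC f n * g j * Cc (eC α) n j) _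
    (fun m n => f' n * opB (eN α.re) g' m * Cc (eN α.re) n m) h1 h2 h1' ?_ ?_
  · rw [ZC, ZC]
    rw [tsum_prod_swap (fun n m => opA iC f n * g m * Cc (eC α) n m),
      tsum_prod_swap (fun n m => f n * opB (eC α) g m * Cc (eC α) n m)]
    exact this.symm
  · intro m n j
    split_ifs
    · simp only [nnnorm_mul]
      gcongr
      · exact hgg _
      · exact eC_le hb (by omega)
      · exact hff _
      · exact Cc_le hb _ _
    · simp
  · rw [ZN, tsum_prod_swap (fun n m =>
      ((f' n * opB (eN α.re) g' m * Cc (eN α.re) n m : ℝ≥0) : ℝ≥0∞))] at hfin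
    exact hfin

lemma opA_le {e : ℕ → ℂ} {e' : ℕ → ℝ≥0} (he : ∀ n, 1 ≤ n → ‖e n‖₊ ≤ e' n)
    {f : ℕ → ℂ} {f' : ℕ → ℝ≥0} (hf0 : f 0 = 0) (hf : ∀ n, ‖f n‖₊ ≤ f' n) (n : ℕ) :
    ‖opA e f n‖₊ ≤ opA e' f' n := by
  rcases Nat.eq_zero_or_pos n with rfl | hn
  · simp [opA, hf0]
  · rw [opA, opA, nnnorm_mul]
    gcongr
    · exact he n hn
    · exact hf n

lemma opB_le {e : ℕ → ℂ} {e' : ℕ → ℝ≥0} (he : ∀ n, 1 ≤ n → ‖e n‖₊ ≤ e' n)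
    {f : ℕ → ℂ} {f' : ℕ → ℝ≥0} (hf : ∀ n, ‖f n‖₊ ≤ f' n) (n : ℕ) :
    ‖opB e f n‖₊ ≤ opB e' f' n := by
  rcases Nat.eq_zero_or_pos n with rfl | hn
  · simp [opB]
  · rw [opB, opB, nnnorm_mul]
    gcongr
    · exact he n hn
    · exact (nnnorm_sum_le _ _).trans (Finset.sum_le_sum fun j _ => hf j)

lemma del0_le (n : ℕ) : ‖(del0 n : ℂ)‖₊ ≤ del0 n := by
  simp only [del0]; split_ifs <;> simp

lemma Wd_le {e : ℕ → ℂ} {e' : ℕ → ℝ≥0} (he : ∀ n, 1 ≤ n → ‖e n‖₊ ≤ e' n) (w : List Bool) :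
    ∀ n, ‖Wd e w n‖₊ ≤ Wd e' w n := by
  induction w with
  | nil => exact opB_le he del0_le
  | cons b w ih =>
    cases b
    · exact opA_le he (Wd_zero e w) ih
    · exact opB_le he ih

lemma iC_le : ∀ n : ℕ, 1 ≤ n → ‖iC n‖₊ ≤ iN n := fun n _ => by simp [iC, iN]

lemma chainN {b : ℝ} (hb : b < 1) (w u : List Bool) :
    ZN b (Wd iN w) (Wd (eN b) u) = ZN b del0 (Wd (eN b) (false :: (w.reverse.map (!·) ++ u))) := by
  induction w generalizing u with
  | nil => exact trBN hb _ _ (Wd_zero _ _)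
  | cons c w ih =>
    cases c
    · have := ih (true :: u)
      simp only [List.reverse_cons, List.map_append, List.append_assoc, List.map_cons,
        List.map_nil, List.singleton_append, Bool.not_false, Wd] at this ⊢
      rw [← this]
      exact trAN hb _ _ (Wd_zero _ _)
    · have := ih (false :: u)
      simp only [List.reverse_cons, List.map_append, List.append_assoc, List.map_cons,
        List.map_nil, List.singleton_append, Bool.not_true, Wd] at this ⊢
      rw [← this]
      exact trBN hb _ _ (Wd_zero _ _)

lemma chainC {α : ℂ} (hb : α.re < 1) (w u : List Bool)
    (hfin : ZN α.re (Wd iN w) (Wd (eN α.re) u) ≠ ⊤) :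
    ZC α (Wd iC w) (Wd (eC α) u) = ZC α del0 (Wd (eC α) (false :: (w.reverse.map (!·) ++ u))) := by
  have hu := Wd_le (fun n hn => eC_le hb hn) (e := eC α) (e' := eN α.re)
  have hw := Wd_le iC_le
  induction w generalizing u with
  | nil => exact trBC hb _ _ _ _ (Wd_zero _ _) (Wd_zero _ _) del0_le (hu u) hfin
  | cons c w ih =>
    cases c
    · have hfin' : ZN α.re (Wd iN w) (Wd (eN α.re) (true :: u)) ≠ ⊤ := by
        change ZN α.re (Wd iN w) (opB (eN α.re) (Wd (eN α.re) u)) ≠ ⊤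
        rw [← trAN hb _ _ (Wd_zero _ _)]; exact hfin
      have := ih (true :: u) hfin'
      simp only [List.reverse_cons, List.map_append, List.append_assoc, List.map_cons,
        List.map_nil, List.singleton_append, Bool.not_false, Wd] at this ⊢
      rw [← this]
      exact trAC hb _ _ _ _ (Wd_zero _ _) (Wd_zero _ _) (hw w) (hu u) hfin'
    · have hfin' : ZN α.re (Wd iN w) (Wd (eN α.re) (false :: u)) ≠ ⊤ := by
        change ZN α.re (Wd iN w) (opA (eN α.re) (Wd (eN α.re) u)) ≠ ⊤
        rw [← trBN hb _ _ (Wd_zero _ _)]; exact hfin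
      have := ih (false :: u) hfin'
      simp only [List.reverse_cons, List.map_append, List.append_assoc, List.map_cons,
        List.map_nil, List.singleton_append, Bool.not_true, Wd] at this ⊢
      rw [← this]
      exact trBC hb _ _ _ _ (Wd_zero _ _) (Wd_zero _ _) (hw w) (hu u) hfin

lemma ZN_left (b : ℝ) (g : ℕ → ℝ≥0) : ZN b del0 g = ∑' m, (g m : ℝ≥0∞) := by
  have hinj : Function.Injective (fun m : ℕ => ((0, m) : ℕ × ℕ)) := fun a b h => by simpa using h
  rw [ZN, ← hinj.tsum_eq]
  · simp [del0, Cc]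
  · rintro ⟨n, m⟩ h
    by_cases hn : n = 0
    · subst hn; simp
    · simp [del0, hn] at h

lemma ZN_right (b : ℝ) (f : ℕ → ℝ≥0) :
    ZN b f del0 = ∑' n, ((f n * Cc (eN b) n 0 : ℝ≥0) : ℝ≥0∞) := by
  have hinj : Function.Injective (fun m : ℕ => ((m, 0) : ℕ × ℕ)) := fun a b h => by simpa using h
  rw [ZN, ← hinj.tsum_eq]
  · simp [del0]
  · rintro ⟨n, m⟩ h
    by_cases hn : m = 0
    · subst hn; simp
    · simp [del0, hn] at h

lemma ZC_left (b : ℂ) (g : ℕ → ℂ) : ZC b del0 g = ∑' m, g m := by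
  have hinj : Function.Injective (fun m : ℕ => ((0, m) : ℕ × ℕ)) := fun a b h => by simpa using h
  rw [ZC, ← hinj.tsum_eq]
  · simp [del0, Cc]
  · rintro ⟨n, m⟩ h
    by_cases hn : n = 0
    · subst hn; simp
    · simp [del0, hn] at h

lemma ZC_right (b : ℂ) (f : ℕ → ℂ) :
    ZC b f del0 = ∑' n, f n * Cc (eC b) n 0 := by
  have hinj : Function.Injective (fun m : ℕ => ((m, 0) : ℕ × ℕ)) := fun a b h => by simpa using h
  rw [ZC, ← hinj.tsum_eq]
  · simp [del0]
  · rintro ⟨n, m⟩ h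
    by_cases hn : m = 0
    · subst hn; simp
    · simp [del0, hn] at h

/-! ### Finiteness -/

lemma eN_le_div {b : ℝ} (hb : b < 1) : ∃ c : ℝ≥0, ∀ m : ℕ, 1 ≤ m → eN b m ≤ c * (m : ℝ≥0)⁻¹ := by
  refine ⟨Real.toNNReal (1 + (1 - b)⁻¹), fun m hm => ?_⟩
  have hb' : 0 < 1 - b := by linarith
  have h1 : (1 : ℝ) ≤ m := by exact_mod_cast hm
  rw [← NNReal.coe_le_coe, eN_coe hb hm]
  push_cast
  rw [Real.coe_toNNReal _ (by positivity), inv_eq_one_div, div_le_iff₀ (by linarith)]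
  have : (1 + (1 - b)⁻¹) * (m : ℝ)⁻¹ * (m - b) = ((1 - b) + 1) * (m - b) / ((1 - b) * m) := by
    field_simp
  rw [this, le_div_iff₀ (by positivity)]
  nlinarith [mul_nonneg hb'.le (sub_nonneg.2 h1)]

lemma sum_inv_sqrt (n : ℕ) : ∑ j ∈ Finset.range (n + 1), (√(j : ℝ))⁻¹ ≤ 2 * √(n : ℝ) := by
  induction n with
  | zero => simp
  | succ n ih =>
    rw [Finset.sum_range_succ]
    refine (add_le_add_left ih _).trans ?_
    have hn' : (0 : ℝ) ≤ n := by positivity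
    have h1 := Real.sq_sqrt hn'
    have h2 := Real.sq_sqrt (show (0 : ℝ) ≤ ((n + 1 : ℕ) : ℝ) by positivity)
    have h3 : 0 < √((n + 1 : ℕ) : ℝ) := Real.sqrt_pos.2 (by positivity)
    have h4 := Real.sqrt_nonneg (n : ℝ)
    push_cast at h2 h3 ⊢
    set x := √(n : ℝ)
    set y := √((n : ℝ) + 1)
    have : y⁻¹ ≤ 2 * (y - x) := by
      rw [inv_eq_one_div, div_le_iff₀ h3]
      nlinarith [sq_nonneg (y - x)]
    linarith

lemma Wd_growth {b : ℝ} (hb : b < 1) (u : List Bool) :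
    ∃ c : ℝ, 0 ≤ c ∧ ∀ m : ℕ, ((Wd (eN b) u m : ℝ≥0) : ℝ) ≤ c * (√(m : ℝ))⁻¹ := by
  obtain ⟨c, hc⟩ := eN_le_div hb
  have hc' : ∀ m : ℕ, 1 ≤ m → (eN b m : ℝ) ≤ c * (m : ℝ)⁻¹ := fun m hm => by
    exact_mod_cast hc m hm
  have hsq : ∀ m : ℕ, 1 ≤ m → (m : ℝ)⁻¹ ≤ (√(m : ℝ))⁻¹ := fun m hm => by
    have h1 : (1 : ℝ) ≤ m := by exact_mod_cast hm
    apply inv_anti₀ (by positivity)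
    rw [Real.sqrt_le_left (by positivity)]
    nlinarith
  induction u with
  | nil =>
    refine ⟨c, c.2, fun m => ?_⟩
    rcases Nat.eq_zero_or_pos m with rfl | hm
    · simp [Wd_zero]
    · have : Wd (eN b) [] m = eN b m := by
        simp only [Wd, opB, del0]
        rw [Finset.sum_ite_eq']
        simp [hm]
      rw [this]
      exact (hc' m hm).trans (mul_le_mul_of_nonneg_left (hsq m hm) c.2)
  | cons x u ih =>
    obtain ⟨d, hd0, hd⟩ := ih
    cases x
    · refine ⟨c * d, by positivity, fun m => ?_⟩
      rcases Nat.eq_zero_or_pos m with rfl | hm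
      · simp [Wd_zero]
      · have h1 : (1 : ℝ) ≤ m := by exact_mod_cast hm
        simp only [Wd, opA, NNReal.coe_mul]
        calc (eN b m : ℝ) * ((Wd (eN b) u m : ℝ≥0) : ℝ) ≤ (c * 1) * (d * (√(m : ℝ))⁻¹) := by
              gcongr
              · exact (hc' m hm).trans (by gcongr; exact inv_le_one_of_one_le₀ h1)
              · exact hd m
          _ = _ := by ring
    · refine ⟨c * (d * 2), by positivity, fun m => ?_⟩
      rcases Nat.eq_zero_or_pos m with rfl | hm
      · simp [Wd_zero]
      · have h1 : (1 : ℝ) ≤ m := by exact_mod_cast hm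
        simp only [Wd, opB, NNReal.coe_mul, NNReal.coe_sum]
        have hsum : ∑ j ∈ Finset.range m, ((Wd (eN b) u j : ℝ≥0) : ℝ) ≤ d * (2 * √(m : ℝ)) := by
          calc _ ≤ ∑ j ∈ Finset.range m, d * (√(j : ℝ))⁻¹ := Finset.sum_le_sum fun j _ => hd j
            _ = d * ∑ j ∈ Finset.range m, (√(j : ℝ))⁻¹ := by rw [Finset.mul_sum]
            _ ≤ _ := by
              gcongr
              refine le_trans ?_ (sum_inv_sqrt m)
              exact Finset.sum_le_sum_of_subset_of_nonneg (by simp)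
                fun _ _ _ => by positivity
        calc _ ≤ (c * (m : ℝ)⁻¹) * (d * (2 * √(m : ℝ))) := by
              gcongr
              exact hc' m hm
          _ = c * (d * 2) * (√(m : ℝ) / m) := by ring
          _ = _ := by rw [Real.sqrt_div_self', one_div]

lemma Wd_summable {b : ℝ} (hb : b < 1) (u : List Bool) :
    Summable (Wd (eN b) (false :: u)) := by
  obtain ⟨c, hc⟩ := eN_le_div hb
  obtain ⟨d, hd0, hd⟩ := Wd_growth hb u
  rw [← NNReal.summable_coe]
  have hs : Summable (fun m : ℕ => (c * d) * (1 / (m : ℝ) ^ (3 / 2 : ℝ))) :=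
    (Real.summable_one_div_nat_rpow.2 (by norm_num)).mul_left _
  refine Summable.of_nonneg_of_le (fun _ => NNReal.coe_nonneg _) (fun m => ?_) hs
  rcases Nat.eq_zero_or_pos m with rfl | hm
  · simp [Wd_zero]
  · have hm' : (0 : ℝ) < m := by exact_mod_cast hm
    have hc' : (eN b m : ℝ) ≤ c * (m : ℝ)⁻¹ := by exact_mod_cast hc m hm
    simp only [Wd, opA, NNReal.coe_mul]
    calc (eN b m : ℝ) * ((Wd (eN b) u m : ℝ≥0) : ℝ) ≤ (c * (m : ℝ)⁻¹) * (d * (√(m : ℝ))⁻¹) := by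
          gcongr
          exact hd m
      _ = c * d * ((m : ℝ)⁻¹ * (√(m : ℝ))⁻¹) := by ring
      _ = _ := by
        congr 1
        rw [Real.sqrt_eq_rpow, ← mul_inv, one_div]
        congr 1
        nth_rewrite 1 [← Real.rpow_one (m : ℝ)]
        rw [← Real.rpow_add hm']
        norm_num

/-- The duality as a series identity. -/
lemma main_series {α : ℂ} (hb : α.re < 1) (w : List Bool) :
    Summable (fun n : ℕ => Wd iN (false :: w) n * Cc (eN α.re) n 0) ∧
    ∑' n : ℕ, Wd iC (false :: w) n * Cc (eC α) n 0 =
      ∑' m : ℕ, Wd (eC α) (false :: w.reverse.map (!·)) m := by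
  have e1 : ZN α.re (Wd iN (false :: w)) del0 = ZN α.re (Wd iN w) (Wd (eN α.re) []) :=
    trAN hb _ _ (Wd_zero _ _)
  have e2 := chainN hb w []
  have hfin : ZN α.re (Wd iN w) (Wd (eN α.re) []) ≠ ⊤ := by
    rw [e2, ZN_left, ENNReal.tsum_coe_ne_top_iff_summable]
    exact Wd_summable hb _
  constructor
  · rw [← ENNReal.tsum_coe_ne_top_iff_summable, ← ZN_right, e1]
    exact hfin
  · rw [← ZC_right, ← ZC_left α]
    have e3 : ZC α (Wd iC (false :: w)) del0 = ZC α (Wd iC w) (Wd (eC α) []) :=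
      trAC hb _ _ _ _ (Wd_zero _ _) (Wd_zero _ _) (Wd_le iC_le w) del0_le hfin
    have e4 := chainC hb w [] hfin
    rw [List.append_nil] at e4
    rw [e3, e4]

/-! ### Sums over strictly decreasing tuples -/

/-- Truncated nested sum. -/
def Sd {K : Type*} [CommSemiring K] (e : ℕ → K) : List ℕ → ℕ → K
  | [], _ => 1
  | a :: t, N => ∑ m ∈ Finset.range N, if m = 0 then 0 else e m ^ a * Sd e t m

def Vd {K : Type*} [CommSemiring K] (e : ℕ → K) (a : ℕ) (t : List ℕ) (m : ℕ) : K :=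
  if m = 0 then 0 else e m ^ a * Sd e t m

open Classical in
noncomputable def Gset (r N : ℕ) : Finset (Fin r → ℕ) :=
  (Fintype.piFinset fun _ => Finset.range N).filter fun n => StrictAnti n ∧ ∀ i, 0 < n i

lemma mem_Gset {r N : ℕ} {n : Fin r → ℕ} :
    n ∈ Gset r N ↔ (∀ i, n i < N) ∧ StrictAnti n ∧ ∀ i, 0 < n i := by
  simp [Gset]

lemma strictAnti_cons {r m : ℕ} {n : Fin r → ℕ} :
    StrictAnti (Fin.cons m n : Fin (r + 1) → ℕ) ↔ (∀ i, n i < m) ∧ StrictAnti n := by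
  constructor
  · intro h
    refine ⟨fun i => by simpa using h (Fin.succ_pos i), fun i j hij => ?_⟩
    simpa using h (Fin.succ_lt_succ_iff.2 hij)
  · rintro ⟨h1, h2⟩ i j hij
    induction j using Fin.cases with
    | zero => exact absurd hij (Fin.not_lt_zero i)
    | succ j =>
      induction i using Fin.cases with
      | zero => simpa using h1 j
      | succ i => simpa using h2 (Fin.succ_lt_succ_iff.1 hij)

lemma cons_mem_iff {r m : ℕ} {n : Fin r → ℕ} :
    (StrictAnti (Fin.cons m n : Fin (r + 1) → ℕ) ∧
      ∀ i, 0 < (Fin.cons m n : Fin (r + 1) → ℕ) i) ↔ 0 < m ∧ n ∈ Gset r m := by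
  rw [strictAnti_cons, mem_Gset, Fin.forall_fin_succ]
  simp only [Fin.cons_zero, Fin.cons_succ]
  tauto

lemma sum_Gset_succ {K : Type*} [AddCommMonoid K] (r N : ℕ) (F : (Fin (r + 1) → ℕ) → K) :
    ∑ n ∈ Gset (r + 1) N, F n =
      ∑ m ∈ Finset.range N, if m = 0 then 0 else ∑ n ∈ Gset r m, F (Fin.cons m n) := by
  have : ∀ m, (if m = 0 then 0 else ∑ n ∈ Gset r m, F (Fin.cons m n)) =
      ∑ n ∈ (if m = 0 then ∅ else Gset r m), F (Fin.cons m n) := fun m => by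
    split_ifs <;> simp
  simp_rw [this]
  rw [Finset.sum_sigma']
  refine Finset.sum_bij' (fun n _ => (⟨n 0, Fin.tail n⟩ : Σ _ : ℕ, (Fin r → ℕ)))
    (fun p _ => Fin.cons p.1 p.2) ?_ ?_ ?_ ?_ ?_
  · intro n hn
    obtain ⟨h1, h2⟩ := mem_Gset.1 hn
    have h3 : 0 < n 0 ∧ Fin.tail n ∈ Gset r (n 0) :=
      cons_mem_iff.1 (by rw [Fin.cons_self_tail]; exact h2)
    simp only [Finset.mem_sigma, Finset.mem_range]
    refine ⟨h1 0, ?_⟩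
    rw [if_neg (by have := h2.2 0; omega)]
    exact h3.2
  · rintro ⟨m, n⟩ hp
    simp only [Finset.mem_sigma, Finset.mem_range] at hp
    obtain ⟨h1, h2⟩ := hp
    by_cases hm : m = 0
    · simp [hm] at h2
    · rw [if_neg hm] at h2
      rw [mem_Gset]
      refine ⟨?_, cons_mem_iff.2 ⟨Nat.pos_of_ne_zero hm, h2⟩⟩
      rw [Fin.forall_fin_succ]
      simp only [Fin.cons_zero, Fin.cons_succ]
      exact ⟨h1, fun i => ((mem_Gset.1 h2).1 i).trans h1⟩
  · intro n _; simp
  · intro p _; simp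
  · intro n _; simp

lemma sum_Gset {K : Type*} [CommSemiring K] (e : ℕ → K) (k : List ℕ) (N : ℕ) :
    ∑ n ∈ Gset k.length N, ∏ i, e (n i) ^ k.get i = Sd e k N := by
  induction k generalizing N with
  | nil =>
    have : Gset ([] : List ℕ).length N = {Fin.elim0} := by
      ext n
      simp only [mem_Gset, Finset.mem_singleton]
      refine ⟨fun _ => funext fun i => i.elim0, fun _ => ⟨fun i => i.elim0, fun i => i.elim0, fun i => i.elim0⟩⟩
    rw [this]
    simp [Sd]
  | cons a t ih =>
    rw [Sd]
    refine (sum_Gset_succ t.length N (fun n => ∏ i, e (n i) ^ (a :: t).get i)).trans ?_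
    refine Finset.sum_congr rfl fun m _ => ?_
    split_ifs
    · rfl
    · rw [← ih, Finset.mul_sum]
      refine Finset.sum_congr rfl fun n _ => ?_
      exact Fin.prod_univ_succ _

abbrev Tup (r : ℕ) := {n : Fin r → ℕ // StrictAnti n ∧ ∀ i, 0 < n i}

/-- fibre sums -/
lemma fibre_sum {K : Type*} [CommSemiring K] [TopologicalSpace K] [T2Space K]
    (e φ : ℕ → K) (a : ℕ) (t : List ℕ) (m : ℕ) :
    ∑' b : (fun n : Tup (t.length + 1) => n.1 0) ⁻¹' {m},
      (φ (b.1.1 0) * ∏ i, e (b.1.1 i) ^ (a :: t).get i) = φ m * Vd e a t m := by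
  rcases Nat.eq_zero_or_pos m with rfl | hm
  · have : IsEmpty ((fun n : Tup (t.length + 1) => n.1 0) ⁻¹' {0}) := by
      refine ⟨fun b => ?_⟩
      have h1 := b.2
      have h2 := b.1.2.2 0
      simp only [Set.mem_preimage, Set.mem_singleton_iff] at h1
      omega
    simp [Vd]
  · let E : (fun n : Tup (t.length + 1) => n.1 0) ⁻¹' {m} ≃ Gset t.length m :=
      { toFun := fun b => ⟨Fin.tail b.1.1, by
          have h1 := b.2
          have h2 := b.1.2
          simp only [Set.mem_preimage, Set.mem_singleton_iff] at h1
          rw [← Fin.cons_self_tail b.1.1, cons_mem_iff, h1] at h2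
          exact h2.2⟩
        invFun := fun n => ⟨⟨Fin.cons m n.1, cons_mem_iff.2 ⟨hm, n.2⟩⟩, by simp⟩
        left_inv := fun b => by
          have h1 := b.2
          simp only [Set.mem_preimage, Set.mem_singleton_iff] at h1
          apply Subtype.ext; apply Subtype.ext
          have : ∀ x : Fin (t.length + 1) → ℕ, x 0 = m → Fin.cons m (Fin.tail x) = x := by
            rintro x rfl; exact Fin.cons_self_tail x
          exact this _ h1
        right_inv := fun n => by simp }
    rw [← E.symm.tsum_eq]
    change ∑' n : Gset t.length m, (φ m * ∏ i : Fin (t.length + 1),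
      e ((Fin.cons m n.1 : Fin (t.length + 1) → ℕ) i) ^ (a :: t).get i) = _
    rw [Finset.tsum_subtype (Gset t.length m) (fun n => φ m * ∏ i : Fin (t.length + 1),
      e ((Fin.cons m n : Fin (t.length + 1) → ℕ) i) ^ (a :: t).get i), ← Finset.mul_sum]
    congr 1
    rw [Vd, if_neg (by omega), ← sum_Gset, Finset.mul_sum]
    refine Finset.sum_congr rfl fun n _ => ?_
    exact Fin.prod_univ_succ _

lemma tuple_sum {K : Type*} [RCLike K] (e φ : ℕ → K) (a : ℕ) (t : List ℕ)
    (hs : Summable (fun m => ‖φ m‖₊ * Vd (fun n => ‖e n‖₊) a t m)) :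
    ∑' n : Tup (t.length + 1), (φ (n.1 0) * ∏ i, e (n.1 i) ^ (a :: t).get i) =
      ∑' m, φ m * Vd e a t m := by
  have hsum : Summable (fun n : Tup (t.length + 1) =>
      φ (n.1 0) * ∏ i, e (n.1 i) ^ (a :: t).get i) := by
    apply Summable.of_nnnorm
    have hf : ∀ m, Summable (fun b : (fun n : Tup (t.length + 1) => n.1 0) ⁻¹' {m} =>
        ‖φ (b.1.1 0) * ∏ i, e (b.1.1 i) ^ (a :: t).get i‖₊) := by
      intro m
      have : Finite ((fun n : Tup (t.length + 1) => n.1 0) ⁻¹' {m}) := by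
        refine Finite.of_injective (β := Gset (t.length + 1) (m + 1)) (fun b => ⟨b.1.1, ?_⟩) ?_
        · have h1 := b.2
          simp only [Set.mem_preimage, Set.mem_singleton_iff] at h1
          refine mem_Gset.2 ⟨fun i => ?_, b.1.2⟩
          have := b.1.2.1.antitone (Fin.zero_le i)
          omega
        · intro b b' h
          exact Subtype.ext (Subtype.ext (by simpa using h))
      have := Fintype.ofFinite ((fun n : Tup (t.length + 1) => n.1 0) ⁻¹' {m})
      exact (hasSum_fintype _).summable
    rw [← ENNReal.tsum_coe_ne_top_iff_summable, ← ENNReal.tsum_fiberwise _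
      (fun n : Tup (t.length + 1) => n.1 0)]
    rw [← ENNReal.tsum_coe_ne_top_iff_summable] at hs
    convert hs using 3 with m
    rw [← fibre_sum (fun n => ‖e n‖₊) (fun n => ‖φ n‖₊), ENNReal.coe_tsum]
    · refine tsum_congr fun b => ?_
      simp only [nnnorm_mul, nnnorm_prod, nnnorm_pow]
    · refine (hf m).congr fun b => ?_
      simp only [nnnorm_mul, nnnorm_prod, nnnorm_pow]
  have := hsum.hasSum.tsum_fiberwise (fun n : Tup (t.length + 1) => n.1 0)
  rw [← this.tsum_eq]
  exact tsum_congr fun m => fibre_sum e φ a t m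

lemma fromWord_ne (w : List Bool) : ∃ a t, fromWord w = a :: t := by
  cases w with
  | nil => exact ⟨1, [], rfl⟩
  | cons b w =>
    cases b
    · simp only [fromWord]
      split <;> simp
    · exact ⟨1, _, rfl⟩

lemma Vd_eq_Wd {K : Type*} [CommSemiring K] (e : ℕ → K) (w : List Bool) :
    ∀ a t, fromWord w = a :: t → ∀ m, Vd e a t m = Wd e w m := by
  induction w with
  | nil =>
    intro a t h m
    simp only [fromWord, List.cons.injEq] at h
    obtain ⟨rfl, rfl⟩ := h
    simp only [Vd, Sd, Wd, opB, del0]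
    rw [Finset.sum_ite_eq']
    by_cases hm : m = 0
    · simp [hm]
    · simp [hm, Nat.pos_of_ne_zero hm]
  | cons b w ih =>
    intro a t h m
    obtain ⟨a', t', h'⟩ := fromWord_ne w
    cases b
    · simp only [fromWord, h', List.cons.injEq] at h
      obtain ⟨rfl, rfl⟩ := h
      simp only [Wd, opA]
      rw [← ih _ _ h' m, Vd, Vd]
      split_ifs
      · simp
      · ring
    · simp only [fromWord, List.cons.injEq] at h
      obtain ⟨rfl, rfl⟩ := h
      simp only [Wd, opB, Vd]
      rw [h', Sd]
      by_cases hm : m = 0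
      · simp [hm]
      · rw [if_neg hm, pow_one]
        congr 1
        exact Finset.sum_congr rfl fun j _ => ih _ _ h' j

lemma fromWord_replicate (n : ℕ) (w : List Bool) (a : ℕ) (t : List ℕ) (h : fromWord w = a :: t) :
    fromWord (List.replicate n false ++ w) = (a + n) :: t := by
  induction n with
  | zero => simpa using h
  | succ n ih =>
    rw [List.replicate_succ, List.cons_append, fromWord, ih]
    simp; ring

lemma fromWord_toWord (k : List ℕ) (hk : k ≠ []) (hpos : ∀ a ∈ k, 0 < a) :
    fromWord (toWord k) = k := by
  induction k with
  | nil => exact absurd rfl hk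
  | cons a t ih =>
    have ha : 0 < a := hpos a (by simp)
    cases t with
    | nil =>
      have := fromWord_replicate (a - 1) [] 1 [] rfl
      rw [List.append_nil] at this
      rw [toWord, this]
      congr 1; omega
    | cons b t =>
      rw [toWord, fromWord_replicate (a - 1) (true :: toWord (b :: t)) 1 (b :: t)]
      · congr 1; omega
      · rw [fromWord, ih (by simp) (fun x hx => hpos x (by simp [hx]))]

lemma toWord_append (l : List ℕ) (a : ℕ) (hl : l ≠ []) :
    toWord (l ++ [a]) = toWord l ++ true :: List.replicate (a - 1) false := by
  induction l with
  | nil => exact absurd rfl hl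
  | cons b t ih =>
    cases t with
    | nil => simp [toWord]
    | cons c t =>
      simp only [List.cons_append, toWord, List.append_assoc]
      rw [← List.cons_append, ih (by simp)]

lemma toWord_reverse (k : List ℕ) : toWord k.reverse = (toWord k).reverse := by
  induction k with
  | nil => rfl
  | cons a t ih =>
    cases t with
    | nil => simp [toWord]
    | cons b t =>
      rw [List.reverse_cons, toWord_append _ _ (by simp), ih, toWord]
      simp

lemma plusOne_fromWord (w : List Bool) : plusOne (fromWord w) = fromWord (false :: w) := by
  obtain ⟨a, t, h⟩ := fromWord_ne w
  simp [fromWord, h, plusOne]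

/-! ### Identification with the frozen definitions -/

lemma Wd_mono {e e' : ℕ → ℝ≥0} (he : ∀ n, 1 ≤ n → e n ≤ e' n) (w : List Bool) :
    ∀ n, Wd e w n ≤ Wd e' w n := by
  induction w with
  | nil =>
    intro n
    rcases Nat.eq_zero_or_pos n with rfl | hn
    · simp [Wd_zero]
    · simp only [Wd, opB]; gcongr; exact he n hn
  | cons b w ih =>
    intro n
    rcases Nat.eq_zero_or_pos n with rfl | hn
    · simp [Wd_zero]
    · cases b
      · simp only [Wd, opA]; exact mul_le_mul' (he n hn) (ih n)
      · simp only [Wd, opB]; exact mul_le_mul' (he n hn) (Finset.sum_le_sum fun j _ => ih j)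

lemma HMZV_eq {α : ℂ} (hb : α.re < 1) (u : List Bool) :
    HMZV (fromWord (false :: u)) (1 - α) = ∑' m, Wd (eC α) (false :: u) m := by
  obtain ⟨a, t, h⟩ := fromWord_ne (false :: u)
  have hs : Summable (fun m => ‖(fun _ => 1 : ℕ → ℂ) m‖₊ * Vd (fun n => ‖eC α n‖₊) a t m) := by
    refine NNReal.summable_of_le (fun m => ?_) (Wd_summable hb u)
    rw [Vd_eq_Wd _ _ a t h]
    simpa using Wd_mono (fun n hn => eC_le hb hn) (false :: u) m
  have key := tuple_sum (eC α) (fun _ => 1) a t hs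
  rw [h]
  simp only [one_mul] at key
  simp_rw [Vd_eq_Wd (eC α) _ a t h] at key
  rw [← key]
  refine tsum_congr fun n => ?_
  refine Finset.prod_congr rfl fun i _ => ?_
  rw [zpow_neg, zpow_natCast, ← inv_pow, eC]
  congr 2
  ring

lemma iN_eq : iN = eN 0 := by
  ext n
  simp [iN, eN]

lemma MPL_eq (k : List ℕ) (hk : k ≠ []) (hpos : ∀ a ∈ k, 0 < a) (x : ℝ) (hx0 : 0 < x)
    (hx1 : x < 1) :
    ((MPL k x : ℝ) : ℂ) = ∑' m : ℕ, (x : ℂ) ^ m * Wd iC (toWord k) m := by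
  have h := fromWord_toWord k hk hpos
  set w := toWord k
  obtain ⟨a, t, rfl⟩ : ∃ a t, k = a :: t := List.exists_cons_of_ne_nil hk
  have hi : (fun n => ‖iC n‖₊) = iN := by ext n; simp [iC, iN]
  have hs : Summable (fun m => ‖(fun m => (x : ℂ) ^ m : ℕ → ℂ) m‖₊ *
      Vd (fun n => ‖iC n‖₊) a t m) := by
    obtain ⟨c, hc0, hc⟩ := Wd_growth (b := 0) (by norm_num) w
    rw [← NNReal.summable_coe]
    have hg : Summable (fun m : ℕ => x ^ m * c) :=
      (summable_geometric_of_lt_one hx0.le hx1).mul_right c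
    refine Summable.of_nonneg_of_le (fun m => NNReal.coe_nonneg _) (fun m => ?_) hg
    rw [hi, Vd_eq_Wd _ _ a t h, iN_eq]
    simp only [nnnorm_pow, NNReal.coe_mul, NNReal.coe_pow, coe_nnnorm, Complex.norm_real,
      Real.norm_eq_abs, abs_of_pos hx0]
    gcongr
    refine (hc m).trans ?_
    rcases Nat.eq_zero_or_pos m with rfl | hm
    · simpa using hc0
    · have : (1 : ℝ) ≤ √(m : ℝ) := Real.one_le_sqrt.2 (by exact_mod_cast hm)
      exact mul_le_of_le_one_right hc0 (inv_le_one_of_one_le₀ this)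
  have key := tuple_sum iC (fun m => (x : ℂ) ^ m) a t hs
  simp_rw [Vd_eq_Wd iC _ a t h] at key
  rw [← key, MPL, dif_pos (by simp), Complex.ofReal_tsum]
  refine tsum_congr fun n => ?_
  push_cast
  rw [div_eq_mul_inv, ← Finset.prod_inv_distrib]
  congr 1
  refine Finset.prod_congr rfl fun i _ => ?_
  rw [iC, inv_pow]

lemma beta_int {α : ℂ} (hb : α.re < 1) (n : ℕ) (hn : 1 ≤ n) :
    IntervalIntegrable (fun x : ℝ => (x : ℂ) ^ ((n : ℂ) - 1) * (1 - (x : ℂ)) ^ (-α)) volume 0 1 ∧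
    ∫ x in (0:ℝ)..1, (x : ℂ) ^ ((n : ℂ) - 1) * (1 - (x : ℂ)) ^ (-α)
      = iC n * Cc (eC α) n 0 := by
  have h1 : 0 < (1 - α).re := by simp; linarith
  have h2 : 0 < (n : ℂ).re := by simp; omega
  have h3 : (1 - α) - 1 = -α := by ring
  constructor
  · have := Complex.betaIntegral_convergent h2 h1
    rwa [h3] at this
  · have e1 : ∫ x in (0:ℝ)..1, (x : ℂ) ^ ((n : ℂ) - 1) * (1 - (x : ℂ)) ^ (-α)
        = Complex.betaIntegral n (1 - α) := by rw [Complex.betaIntegral, h3]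
    obtain ⟨k, rfl⟩ : ∃ k, n = k + 1 := ⟨n - 1, by omega⟩
    rw [e1, Complex.betaIntegral_symm]
    push_cast
    rw [Complex.betaIntegral_eval_nat_add_one_right h1, Cc, Finset.prod_mul_distrib, iC,
      ← Nat.cast_prod, Finset.prod_range_add_one_eq_factorial, Nat.factorial_succ, div_eq_mul_inv,
      ← Finset.prod_inv_distrib, ← mul_assoc]
    push_cast
    have : (k : ℂ) + 1 ≠ 0 := by norm_cast
    rw [inv_mul_cancel_left₀ this]
    congr 1
    refine Finset.prod_congr rfl fun i _ => ?_
    rw [eC]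
    push_cast
    congr 1
    ring

lemma eC_real {b : ℝ} (hb : b < 1) {m : ℕ} (hm : 1 ≤ m) : eC (b : ℂ) m = ((eN b m : ℝ) : ℂ) := by
  rw [eN_coe hb hm, eC]; push_cast; rfl

lemma Cc_real {b : ℝ} (hb : b < 1) (n : ℕ) :
    Cc (eC (b : ℂ)) n 0 = (((Cc (eN b) n 0 : ℝ≥0) : ℝ) : ℂ) := by
  simp only [Cc, NNReal.coe_prod, Complex.ofReal_prod]
  refine Finset.prod_congr rfl fun i _ => ?_
  rw [eC_real hb (by omega)]
  push_cast; rfl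

lemma beta_norm {α : ℂ} (hb : α.re < 1) (n : ℕ) (hn : 1 ≤ n) :
    ∫ x in Set.Ioo (0:ℝ) 1, ‖(x : ℂ) ^ ((n : ℂ) - 1) * (1 - (x : ℂ)) ^ (-α)‖
      = ((iN n * Cc (eN α.re) n 0 : ℝ≥0) : ℝ) := by
  have h := (beta_int (α := (α.re : ℂ)) (by simpa using hb) n hn).2
  rw [intervalIntegral.integral_of_le zero_le_one, integral_Ioc_eq_integral_Ioo, Cc_real hb] at h
  rw [← Complex.ofReal_inj, ← integral_complex_ofReal]
  have e : ((((iN n * Cc (eN α.re) n 0 : ℝ≥0) : ℝ)) : ℂ)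
      = iC n * (((Cc (eN α.re) n 0 : ℝ≥0) : ℝ) : ℂ) := by
    simp [iN, iC]
  rw [e, ← h]
  refine setIntegral_congr_fun measurableSet_Ioo fun x hx => ?_
  have hx1 : 0 < 1 - x := by linarith [hx.2]
  have c1 : (1 - (x : ℂ)) = ((1 - x : ℝ) : ℂ) := by push_cast; rfl
  simp only [c1]
  rw [norm_mul, Complex.norm_cpow_eq_rpow_re_of_pos hx.1, Complex.norm_cpow_eq_rpow_re_of_pos hx1]
  push_cast
  rw [Complex.ofReal_cpow hx.1.le, Complex.ofReal_cpow hx1.le]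
  simp

lemma integral_side {α : ℂ} (hb : α.re < 1) (k : List ℕ) (hk : k ≠ []) (hpos : ∀ a ∈ k, 0 < a) :
    (∫ x in (0:ℝ)..1, ((MPL k x : ℝ) : ℂ) / ((x : ℂ) * ((1 : ℂ) - (x : ℂ)) ^ α)) =
      ∑' n : ℕ, Wd iC (false :: toWord k) n * Cc (eC α) n 0 := by
  set w := toWord k with hw
  let G : ℕ → ℝ → ℂ := fun n x =>
    Wd iC w n * ((x : ℂ) ^ ((n : ℂ) - 1) * (1 - (x : ℂ)) ^ (-α))
  have hGi : ∀ n, Integrable (G n) (volume.restrict (Set.Ioo (0:ℝ) 1)) := by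
    intro n
    rcases Nat.eq_zero_or_pos n with rfl | hn
    · have : G 0 = fun _ => 0 := by ext x; simp [G, Wd_zero]
      rw [this]; exact integrable_zero _ _ _
    · refine Integrable.const_mul ?_ _
      have := (beta_int hb n hn).1
      rw [intervalIntegrable_iff_integrableOn_Ioo_of_le zero_le_one] at this
      exact this
  have hGe : ∀ n, ∫ x in Set.Ioo (0:ℝ) 1, G n x = Wd iC (false :: w) n * Cc (eC α) n 0 := by
    intro n
    rcases Nat.eq_zero_or_pos n with rfl | hn
    · simp [G, Wd_zero]
    · have := (beta_int hb n hn).2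
      rw [intervalIntegral.integral_of_le zero_le_one, integral_Ioc_eq_integral_Ioo] at this
      simp only [G]
      rw [integral_const_mul, this]
      simp only [Wd, opA]
      ring
  have hGs : Summable fun n => ∫ x in Set.Ioo (0:ℝ) 1, ‖G n x‖ := by
    have hs := NNReal.summable_coe.2 (main_series hb w).1
    refine Summable.of_nonneg_of_le (fun n => integral_nonneg fun x => norm_nonneg _)
      (fun n => ?_) hs
    rcases Nat.eq_zero_or_pos n with rfl | hn
    · simp [G, Wd_zero]
    · have := beta_norm hb n hn
      simp only [G]
      simp_rw [norm_mul (Wd iC w n)]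
      rw [integral_const_mul, this]
      simp only [Wd, opA]
      rw [mul_right_comm, mul_comm (_ * _) (Wd iN w n), NNReal.coe_mul (Wd iN w n)]
      gcongr
      exact Wd_le iC_le w n
  have key := hasSum_integral_of_summable_integral_norm hGi hGs
  simp_rw [hGe] at key
  rw [key.tsum_eq, intervalIntegral.integral_of_le zero_le_one, integral_Ioc_eq_integral_Ioo]
  refine setIntegral_congr_fun measurableSet_Ioo fun x hx => ?_
  have hx0 : (x : ℂ) ≠ 0 := by exact_mod_cast hx.1.ne'
  rw [MPL_eq k hk hpos x hx.1 hx.2, ← tsum_div_const]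
  refine tsum_congr fun n => ?_
  simp only [G]
  rw [Complex.cpow_neg, Complex.cpow_sub _ _ hx0, Complex.cpow_natCast, Complex.cpow_one]
  simp only [div_eq_mul_inv, mul_inv]
  ring

theorem stmt2 (k : List ℕ) (hk : k ≠ []) (hkpos : ∀ a ∈ k, 0 < a)
    (α : ℂ) (hα : ∀ j : ℕ, 0 < j → α ≠ (j : ℂ)) (hre : α.re < 1) :
    (∫ x in (0:ℝ)..1,
        ((MPL k x : ℝ) : ℂ) / ((x : ℂ) * ((1 : ℂ) - (x : ℂ)) ^ α)) =
      HMZV (plusOne (HDual k.reverse)) (1 - α) := by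
  rw [integral_side hre k hk hkpos, (main_series hre (toWord k)).2, HDual, plusOne_fromWord,
    HMZV_eq hre, toWord_reverse]
end

section
/- Let k=(k_1,…,k_r) be a composition and let α∈ℂ∖ℕ with ℜ(α)<1. Then ∫_0^1 A(k;x)/(x·((1−x)/(1+x))^α) dx = T((←k^∨)_+; 1−α). -/
open scoped BigOperators
open MeasureTheory

namespace S3

/-- dual word with the last part increased, smallest variable first -/
def dpl : List Bool → List ℕ
  | [] => [2]
  | true :: v => plusOne (dpl v)
  | false :: v => 1 :: dpl v

def incLast : List ℕ → List ℕ
  | [] => []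
  | [a] => [a + 1]
  | a :: b :: l => a :: incLast (b :: l)

lemma fromWord_ne (v : List Bool) : fromWord v ≠ [] := by
  cases v with
  | nil => simp [fromWord]
  | cons b v =>
    cases b
    · simp only [fromWord]; split <;> simp
    · simp [fromWord]

lemma fromWord_false (v : List Bool) : fromWord (false :: v) = plusOne (fromWord v) := by
  have := fromWord_ne v
  simp only [fromWord]
  cases h : fromWord v with
  | nil => simp_all
  | cons a t => rfl

lemma incLast_cons (a : ℕ) (l : List ℕ) (h : l ≠ []) : incLast (a :: l) = a :: incLast l := by
  cases l with
  | nil => simp at h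
  | cons b l => rfl

lemma incLast_plusOne (l : List ℕ) : incLast (plusOne l) = plusOne (incLast l) := by
  match l with
  | [] => rfl
  | [a] => rfl
  | a :: b :: l => rfl

lemma dpl_eq (v : List Bool) : dpl v = incLast (fromWord (v.map fun b => !b)) := by
  induction v with
  | nil => rfl
  | cons b v ih =>
    cases b
    · simp only [List.map_cons, Bool.not_false, fromWord, dpl]
      rw [incLast_cons _ _ (fromWord_ne _), ih]
    · simp only [List.map_cons, Bool.not_true, fromWord_false, dpl]
      rw [incLast_plusOne, ih]

lemma incLast_append (l : List ℕ) (a : ℕ) : incLast (l ++ [a]) = l ++ [a + 1] := by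
  induction l with
  | nil => rfl
  | cons b l ih => rw [List.cons_append, incLast_cons _ _ (by simp), ih]; rfl

lemma incLast_reverse (l : List ℕ) : incLast l.reverse = (plusOne l).reverse := by
  cases l with
  | nil => rfl
  | cons a l => simp [plusOne, incLast_append]

lemma fromWord_append_true (v : List Bool) : fromWord (v ++ [true]) = fromWord v ++ [1] := by
  induction v with
  | nil => rfl
  | cons b v ih =>
    cases b
    · rw [List.cons_append, fromWord_false, fromWord_false, ih]
      have := fromWord_ne v
      cases h : fromWord v with
      | nil => simp_all
      | cons a t => rfl
    · simp [fromWord, ih]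

lemma fromWord_append_false (v : List Bool) : fromWord (v ++ [false]) = incLast (fromWord v) := by
  induction v with
  | nil => rfl
  | cons b v ih =>
    cases b
    · rw [List.cons_append, fromWord_false, fromWord_false, ih, incLast_plusOne]
    · simp [fromWord, ih, incLast_cons _ _ (fromWord_ne v)]

lemma fromWord_reverse (v : List Bool) : fromWord v.reverse = (fromWord v).reverse := by
  induction v with
  | nil => rfl
  | cons b v ih =>
    cases b
    · rw [List.reverse_cons, fromWord_append_false, ih, incLast_reverse, fromWord_false]
    · rw [List.reverse_cons, fromWord_append_true, ih]; simp [fromWord]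

lemma toWord_append (l : List ℕ) (h : l ≠ []) (a : ℕ) :
    toWord (l ++ [a]) = toWord l ++ true :: List.replicate (a - 1) false := by
  match l with
  | [] => simp at h
  | [b] => simp [toWord]
  | b :: c :: l =>
    have := toWord_append (c :: l) (by simp) a
    simp only [List.cons_append] at this ⊢
    simp [toWord, this]

lemma toWord_reverse (k : List ℕ) : toWord k.reverse = (toWord k).reverse := by
  match k with
  | [] => rfl
  | [a] => simp [toWord]
  | a :: b :: l =>
    rw [List.reverse_cons, toWord_append _ (by simp), toWord_reverse (b :: l)]
    simp [toWord]

lemma plusOne_HDual (k : List ℕ) : plusOne (HDual k.reverse) = (dpl (toWord k)).reverse := by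
  rw [dpl_eq, HDual, toWord_reverse, List.map_reverse, fromWord_reverse]
  generalize fromWord ((toWord k).map fun b => !b) = l
  have := incLast_reverse l.reverse
  rw [List.reverse_reverse] at this
  rw [this, List.reverse_reverse]

/-! HMTV -/

abbrev Sb (r : ℕ) := {n : Fin r → ℕ // StrictAnti n ∧ ∀ i, 0 < n i}

noncomputable def hterm (r : ℕ) (e : Fin r → ℕ) (s : ℂ) (n : Fin r → ℕ) : ℂ :=
  2 ^ r * ∏ i, (2 * (n i : ℂ) - (r : ℂ) - 1 + (i.val : ℂ) + s) ^ (-(e i : ℤ))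

noncomputable def Hg (r : ℕ) (e : Fin r → ℕ) (s : ℂ) : ℂ := ∑' n : Sb r, hterm r e s n.1

lemma HMTV_eq (k : List ℕ) (s : ℂ) (r : ℕ) (e : Fin r → ℕ) (h : k = List.ofFn e) :
    HMTV k s = Hg r e s := by
  obtain rfl : r = k.length := by rw [h, List.length_ofFn]
  have : e = k.get := List.ofFn_injective (h.symm.trans (List.ofFn_get k).symm)
  subst this
  rfl

def peel (r : ℕ) : ℕ × Sb r ≃ Sb (r + 1) where
  toFun p := ⟨Fin.snoc (α := fun _ => ℕ) (fun i => p.2.1 i + p.1 + 1) (p.1 + 1), by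
    obtain ⟨j, n, hn, hp⟩ := p
    refine ⟨?_, ?_⟩
    · intro a b hab
      induction a using Fin.lastCases with
      | last => exact absurd hab (not_lt.2 (Fin.le_last b))
      | cast a =>
        induction b using Fin.lastCases with
        | last => simp only [Fin.snoc_castSucc, Fin.snoc_last]; have := hp a; omega
        | cast b =>
          simp only [Fin.snoc_castSucc]
          have := hn (Fin.castSucc_lt_castSucc_iff.1 hab); omega
    · intro i
      induction i using Fin.lastCases with
      | last => simp
      | cast a => simp⟩
  invFun n := (n.1 (Fin.last r) - 1, ⟨fun i => n.1 i.castSucc - n.1 (Fin.last r), by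
    obtain ⟨n, hn, hp⟩ := n
    refine ⟨?_, ?_⟩
    · intro a b hab
      have h1 := hn (Fin.castSucc_lt_castSucc_iff.2 hab)
      have h2 := hn (Fin.castSucc_lt_last b)
      show n b.castSucc - n (Fin.last r) < n a.castSucc - n (Fin.last r)
      omega
    · intro a
      have h2 := hn (Fin.castSucc_lt_last a)
      show 0 < n a.castSucc - n (Fin.last r)
      omega⟩)
  left_inv p := by
    obtain ⟨j, n, hn, hp⟩ := p
    ext
    · simp
    · simp
  right_inv n := by
    obtain ⟨n, hn, hp⟩ := n
    apply Subtype.ext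
    funext i
    have h3 := hp (Fin.last r)
    induction i using Fin.lastCases with
    | last => simp; omega
    | cast a =>
      have h2 := hn (Fin.castSucc_lt_last a)
      simp; omega

noncomputable def TrE : List ℕ → ℝ → ENNReal
  | [], _ => 1
  | d :: L, σ => ∑' n : ℕ, ENNReal.ofReal (2 / (σ + 2 * n) ^ d) * TrE L (σ + 2 * n + 1)

noncomputable def Tr : List ℕ → ℂ → ℂ
  | [], _ => 1
  | d :: L, s => ∑' n : ℕ, 2 * (s + 2 * n) ^ (-(d : ℤ)) * Tr L (s + 2 * n + 1)

def eL (L : List ℕ) : Fin L.length → ℕ := fun i => L.get i.rev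

lemma hterm_peel (d : ℕ) (L : List ℕ) (s : ℂ) (j : ℕ) (n : Sb L.length) :
    hterm (d :: L).length (eL (d :: L)) s (peel L.length (j, n)).1 =
      2 * (s + 2 * j) ^ (-(d : ℤ)) * hterm L.length (eL L) (s + 2 * j + 1) n.1 := by
  unfold hterm
  simp only [List.length_cons]
  rw [Fin.prod_univ_castSucc]
  have h1 : eL (d :: L) (Fin.last _) = d := by simp [eL]
  have h2 : ∀ i : Fin L.length, eL (d :: L) i.castSucc = eL L i := by
    intro i; simp [eL, Fin.rev_castSucc]
  rw [h1]
  simp only [h2, peel, Equiv.coe_fn_mk, Fin.snoc_castSucc, Fin.snoc_last, Fin.val_castSucc,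
    Fin.val_last]
  have h3 : ∀ i : Fin L.length, (2 * ((n.1 i + j + 1 : ℕ) : ℂ) - ((L.length + 1 : ℕ) : ℂ) - 1
      + (i.val : ℂ) + s) = 2 * (n.1 i : ℂ) - (L.length : ℂ) - 1 + (i.val : ℂ) + (s + 2 * j + 1) := by
    intro i; push_cast; ring
  have h4 : (2 * ((j + 1 : ℕ) : ℂ) - ((L.length + 1 : ℕ) : ℂ) - 1 + (L.length : ℂ) + s)
      = s + 2 * j := by push_cast; ring
  simp only [h3, h4]
  ring

lemma enorm_fac (s : ℂ) (hs : 0 < s.re) (j d : ℕ) :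
    ‖2 * (s + 2 * j) ^ (-(d : ℤ))‖ₑ ≤ ENNReal.ofReal (2 / (s.re + 2 * j) ^ d) := by
  rw [← ofReal_norm]
  apply ENNReal.ofReal_le_ofReal
  rw [norm_mul, zpow_neg, norm_inv, zpow_natCast, norm_pow, Complex.norm_ofNat, div_eq_mul_inv]
  have h : s.re + 2 * j ≤ ‖s + 2 * j‖ := by
    have := Complex.re_le_norm (s + 2 * j)
    simpa using this
  gcongr

lemma tsum_enorm_le (L : List ℕ) : ∀ s : ℂ, 0 < s.re →
    ∑' n : Sb L.length, ‖hterm L.length (eL L) s n.1‖ₑ ≤ TrE L s.re := by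
  induction L with
  | nil =>
    intro s hs
    have : Unique (Sb ([] : List ℕ).length) :=
      ⟨⟨⟨Fin.elim0, fun i => i.elim0, fun i => i.elim0⟩⟩, fun n => Subtype.ext (funext fun i => i.elim0)⟩
    rw [tsum_eq_single default (by intro b hb; exact absurd (Unique.eq_default b) hb)]
    simp [hterm, TrE]
  | cons d L ih =>
    intro s hs
    refine le_of_eq_of_le ((peel L.length).tsum_eq
      (fun n => ‖hterm (d :: L).length (eL (d :: L)) s n.1‖ₑ)).symm ?_
    rw [ENNReal.summable.tsum_prod' (fun _ => ENNReal.summable)]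
    unfold TrE
    apply ENNReal.tsum_le_tsum
    intro j
    simp only [hterm_peel, enorm_mul (2 * (s + 2 * j) ^ (-(d : ℤ)))]
    rw [ENNReal.tsum_mul_left]
    gcongr
    · exact enorm_fac s hs j d
    · have := ih (s + 2 * j + 1) (by simp; positivity)
      simpa using this

lemma Hg_eq_Tr (L : List ℕ) : ∀ s : ℂ, 0 < s.re → TrE L s.re ≠ ⊤ →
    Hg L.length (eL L) s = Tr L s := by
  induction L with
  | nil =>
    intro s hs _
    have : Unique (Sb ([] : List ℕ).length) :=
      ⟨⟨⟨Fin.elim0, fun i => i.elim0, fun i => i.elim0⟩⟩, fun n => Subtype.ext (funext fun i => i.elim0)⟩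
    rw [Hg, tsum_eq_single default (by intro b hb; exact absurd (Unique.eq_default b) hb)]
    simp [hterm, Tr]
  | cons d L ih =>
    intro s hs hfin
    have hsum : Summable fun n : Sb (d :: L).length => hterm (d :: L).length (eL (d :: L)) s n.1 := by
      apply Summable.of_enorm
      exact ((tsum_enorm_le (d :: L) s hs).trans_lt (lt_top_iff_ne_top.2 hfin)).ne
    have hsum2 : Summable fun p => hterm (d :: L).length (eL (d :: L)) s (peel L.length p).1 :=
      hsum.comp_injective (peel L.length).injective
    refine ((peel L.length).tsum_eq
      (fun n => hterm (d :: L).length (eL (d :: L)) s n.1)).symm.trans ?_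
    rw [hsum2.tsum_prod]
    unfold Tr
    congr 1
    funext j
    simp only [hterm_peel]
    rw [tsum_mul_left]
    congr 1
    refine ih (s + 2 * j + 1) (by simp; positivity) ?_
    intro htop
    apply hfin
    unfold TrE
    refine ENNReal.tsum_eq_top_of_eq_top ⟨j, ?_⟩
    have : (s + 2 * j + 1).re = s.re + 2 * j + 1 := by simp
    rw [this] at htop
    rw [htop, ENNReal.mul_top]
    simp only [ne_eq, ENNReal.ofReal_eq_zero, not_le]
    positivity

lemma HMTV_reverse (L : List ℕ) (s : ℂ) (hs : 0 < s.re) (h : TrE L s.re ≠ ⊤) :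
    HMTV L.reverse s = Tr L s := by
  rw [HMTV_eq L.reverse s L.length (eL L), Hg_eq_Tr L s hs h]
  apply List.ext_get
  · simp
  · intro i h1 h2
    simp [eL, Fin.rev]
    congr 1
    omega

end S3

namespace S3
open Set

noncomputable def yy (x : ℝ) : ℝ := (1 - x) / (1 + x)

lemma yy_pos {x : ℝ} (h : x ∈ Ioo (0:ℝ) 1) : 0 < yy x :=
  div_pos (by linarith [h.2]) (by linarith [h.1])

lemma yy_lt_one {x : ℝ} (h : x ∈ Ioo (0:ℝ) 1) : yy x < 1 := by
  unfold yy
  rw [div_lt_one (by linarith [h.1])]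
  linarith [h.1]

lemma om_pos {x : ℝ} (h : x ∈ Ioo (0:ℝ) 1) : 0 < 1 - x ^ 2 := by nlinarith [h.1, h.2]

@[fun_prop]
lemma meas_yy : Measurable yy := by unfold yy; fun_prop

lemma hasDerivAt_yy {x : ℝ} (h : x ∈ Ioo (0:ℝ) 1) :
    HasDerivAt yy (-(yy x * (2 / (1 - x ^ 2)))) x := by
  have h1 : (1 + x) ≠ 0 := by linarith [h.1]
  have h2 : (1 - x) ≠ 0 := by linarith [h.2]
  have h3 := (om_pos h).ne'
  have := ((hasDerivAt_id x).const_sub 1).div ((hasDerivAt_id x).const_add 1) h1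
  refine this.congr_deriv ?_
  have h4 : 1 - x ^ 2 = (1 - x) * (1 + x) := by ring
  simp only [yy, id, h4]
  field_simp
  ring

lemma cont_yy {t : ℝ} (ht : 0 ≤ t) : ContinuousOn yy (Icc t 1) := by
  unfold yy
  refine ContinuousOn.div (by fun_prop) (by fun_prop) ?_
  intro x hx
  have := hx.1
  linarith

lemma ker_real (σ : ℝ) (hσ : 0 < σ) {t : ℝ} (ht : t ∈ Ico (0:ℝ) 1) :
    IntegrableOn (fun x => yy x ^ σ * (2 / (1 - x ^ 2))) (Ioo t 1) ∧
    ∫ x in Ioo t 1, yy x ^ σ * (2 / (1 - x ^ 2)) = yy t ^ σ / σ := by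
  have hc : ContinuousOn (fun x => -(yy x ^ σ / σ)) (Icc t 1) :=
    (((cont_yy ht.1).rpow_const (fun x _ => Or.inr hσ.le)).div_const σ).neg
  have hd : ∀ x ∈ Ioo t 1, HasDerivAt (fun x => -(yy x ^ σ / σ))
      (yy x ^ σ * (2 / (1 - x ^ 2))) x := by
    intro x hx
    have hx' : x ∈ Ioo (0:ℝ) 1 := ⟨ht.1.trans_lt hx.1, hx.2⟩
    have hy := yy_pos hx'
    have := (((hasDerivAt_yy hx').rpow_const (p := σ) (Or.inl hy.ne')).div_const σ).neg
    refine this.congr_deriv ?_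
    rw [Real.rpow_sub_one hy.ne']
    have := (om_pos hx').ne'
    field_simp
  have hi : IntegrableOn (fun x => yy x ^ σ * (2 / (1 - x ^ 2))) (Ioc t 1) := by
    refine intervalIntegral.integrableOn_deriv_of_nonneg hc hd ?_
    intro x hx
    have hx' : x ∈ Ioo (0:ℝ) 1 := ⟨ht.1.trans_lt hx.1, hx.2⟩
    have hy := yy_pos hx'
    have := om_pos hx'
    positivity
  refine ⟨hi.mono_set Ioo_subset_Ioc_self, ?_⟩
  rw [← integral_Ioc_eq_integral_Ioo, ← intervalIntegral.integral_of_le ht.2.le,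
    intervalIntegral.integral_eq_sub_of_hasDerivAt_of_le ht.2.le hc hd
    ((intervalIntegrable_iff_integrableOn_Ioc_of_le ht.2.le).2 hi)]
  have : yy 1 = 0 := by simp [yy]
  simp [this, Real.zero_rpow hσ.ne']

lemma ker_lint (σ : ℝ) (hσ : 0 < σ) {t : ℝ} (ht : t ∈ Ico (0:ℝ) 1) :
    ∫⁻ x in Ioo t 1, ENNReal.ofReal (yy x ^ σ * (2 / (1 - x ^ 2))) =
      ENNReal.ofReal (yy t ^ σ / σ) := by
  obtain ⟨h1, h2⟩ := ker_real σ hσ ht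
  rw [← h2, ofReal_integral_eq_lintegral_ofReal h1]
  filter_upwards [ae_restrict_mem measurableSet_Ioo] with x hx
  have hx' : x ∈ Ioo (0:ℝ) 1 := ⟨ht.1.trans_lt hx.1, hx.2⟩
  have hy := yy_pos hx'
  have := om_pos hx'
  show 0 ≤ _
  positivity

/-- complex kernel -/
noncomputable def pc (s : ℂ) (x : ℝ) : ℂ := (yy x : ℂ) ^ s * ((2 / (1 - x ^ 2) : ℝ) : ℂ)

@[fun_prop]
lemma meas_pc (s : ℂ) : Measurable (pc s) := by unfold pc; fun_prop

lemma enorm_pc (s : ℂ) {x : ℝ} (h : x ∈ Ioo (0:ℝ) 1) :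
    ‖pc s x‖ₑ = ENNReal.ofReal (yy x ^ s.re * (2 / (1 - x ^ 2))) := by
  have := om_pos h
  rw [pc, ← ofReal_norm, norm_mul, Complex.norm_cpow_eq_rpow_re_of_pos (yy_pos h),
    Complex.norm_real, Real.norm_of_nonneg (by positivity)]

lemma ker_complex (s : ℂ) (hs : 0 < s.re) {t : ℝ} (ht : t ∈ Ico (0:ℝ) 1) :
    ∫ x in Ioo t 1, pc s x = (yy t : ℂ) ^ s / s := by
  have hs0 : s ≠ 0 := by rintro rfl; simp at hs
  have hc : ContinuousOn (fun x => -((yy x : ℂ) ^ s / s)) (Icc t 1) := by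
    refine ContinuousOn.neg (ContinuousOn.div_const ?_ s)
    exact (Complex.continuous_ofReal_cpow_const hs).comp_continuousOn (cont_yy ht.1)
  have hd : ∀ x ∈ Ioo t 1, HasDerivAt (fun x => -((yy x : ℂ) ^ s / s)) (pc s x) x := by
    intro x hx
    have hx' : x ∈ Ioo (0:ℝ) 1 := ⟨ht.1.trans_lt hx.1, hx.2⟩
    have hy := yy_pos hx'
    have h1 : HasDerivAt (fun x => (yy x : ℂ)) _ x := (hasDerivAt_yy hx').ofReal_comp
    have h0 : HasDerivAt (fun z : ℂ => z ^ s) _ (yy x : ℂ) :=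
      (hasDerivAt_id (yy x : ℂ)).cpow_const (c := s) (Or.inl (by simpa using hy))
    have h2 := ((HasDerivAt.comp x h0 h1).div_const s).neg
    refine h2.congr_deriv ?_
    have hyc : (yy x : ℂ) ≠ 0 := by exact_mod_cast hy.ne'
    simp only [id]
    rw [Complex.cpow_sub _ _ hyc, Complex.cpow_one, pc]
    push_cast
    field_simp
  have hi : IntegrableOn (pc s) (Ioc t 1) := by
    rw [integrableOn_Ioc_iff_integrableOn_Ioo]
    refine ⟨(meas_pc s).aestronglyMeasurable, ?_⟩
    rw [hasFiniteIntegral_iff_enorm, setLIntegral_congr_fun measurableSet_Ioo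
      (fun x hx => enorm_pc s ⟨ht.1.trans_lt hx.1, hx.2⟩), ker_lint _ hs ht]
    exact ENNReal.ofReal_lt_top
  rw [← integral_Ioc_eq_integral_Ioo, ← intervalIntegral.integral_of_le ht.2.le,
    intervalIntegral.integral_eq_sub_of_hasDerivAt_of_le ht.2.le hc hd
    ((intervalIntegrable_iff_integrableOn_Ioc_of_le ht.2.le).2 hi)]
  have : yy 1 = 0 := by simp [yy]
  simp [this, Complex.zero_cpow hs0]

lemma lint_ind (x : ℝ) (hx : x ∈ Ioo (0:ℝ) 1) (g : ℝ → ENNReal) :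
    ∫⁻ t in Ioo (0:ℝ) 1, (if t < x then g t else 0) = ∫⁻ t in Ioo 0 x, g t := by
  have : (fun t => if t < x then g t else 0) = (Iio x).indicator g := by
    funext t; simp [indicator]
  rw [this, lintegral_indicator measurableSet_Iio, Measure.restrict_restrict measurableSet_Iio]
  congr 2
  ext t; simp only [mem_inter_iff, mem_Iio, mem_Ioo]
  constructor
  · rintro ⟨a, b, c⟩; exact ⟨b, a⟩
  · rintro ⟨a, b⟩; exact ⟨b, a, b.trans hx.2⟩

lemma lint_ind' (t : ℝ) (ht : t ∈ Ioo (0:ℝ) 1) (g : ℝ → ENNReal) :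
    ∫⁻ x in Ioo (0:ℝ) 1, (if t < x then g x else 0) = ∫⁻ x in Ioo t 1, g x := by
  have : (fun x => if t < x then g x else 0) = (Ioi t).indicator g := by
    funext t; simp [indicator]
  rw [this, lintegral_indicator measurableSet_Ioi, Measure.restrict_restrict measurableSet_Ioi]
  congr 2
  ext x; simp only [mem_inter_iff, mem_Ioi, mem_Ioo]
  constructor
  · rintro ⟨a, b, c⟩; exact ⟨a, c⟩
  · rintro ⟨a, b⟩; exact ⟨a, ht.1.trans a, b⟩

lemma int_ind (x : ℝ) (hx : x ∈ Ioo (0:ℝ) 1) (g : ℝ → ℂ) :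
    ∫ t in Ioo (0:ℝ) 1, (if t < x then g t else 0) = ∫ t in Ioo 0 x, g t := by
  have : (fun t => if t < x then g t else 0) = (Iio x).indicator g := by
    funext t; simp [indicator]
  rw [this, integral_indicator measurableSet_Iio, Measure.restrict_restrict measurableSet_Iio]
  congr 2
  ext t; simp only [mem_inter_iff, mem_Iio, mem_Ioo]
  constructor
  · rintro ⟨a, b, c⟩; exact ⟨b, a⟩
  · rintro ⟨a, b⟩; exact ⟨b, a, b.trans hx.2⟩

lemma int_ind' (t : ℝ) (ht : t ∈ Ioo (0:ℝ) 1) (g : ℝ → ℂ) :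
    ∫ x in Ioo (0:ℝ) 1, (if t < x then g x else 0) = ∫ x in Ioo t 1, g x := by
  have : (fun x => if t < x then g x else 0) = (Ioi t).indicator g := by
    funext t; simp [indicator]
  rw [this, integral_indicator measurableSet_Ioi, Measure.restrict_restrict measurableSet_Ioi]
  congr 2
  ext x; simp only [mem_inter_iff, mem_Ioi, mem_Ioo]
  constructor
  · rintro ⟨a, b, c⟩; exact ⟨a, c⟩
  · rintro ⟨a, b⟩; exact ⟨a, ht.1.trans a, b⟩

lemma tonelli (h : ℝ → ENNReal) (hm : Measurable h) (σ : ℝ) (hσ : 0 < σ) :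
    ∫⁻ x in Ioo (0:ℝ) 1, (∫⁻ t in Ioo 0 x, h t) * ENNReal.ofReal (yy x ^ σ * (2 / (1 - x ^ 2)))
    = ∫⁻ t in Ioo (0:ℝ) 1, h t * ENNReal.ofReal (yy t ^ σ / σ) := by
  have e1 : ∀ x ∈ Ioo (0:ℝ) 1,
      (∫⁻ t in Ioo 0 x, h t) * ENNReal.ofReal (yy x ^ σ * (2 / (1 - x ^ 2))) =
      ∫⁻ t in Ioo (0:ℝ) 1, (if t < x then h t * ENNReal.ofReal (yy x ^ σ * (2 / (1 - x ^ 2))) else 0) := by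
    intro x hx
    rw [lint_ind x hx, lintegral_mul_const _ hm]
  rw [setLIntegral_congr_fun measurableSet_Ioo e1, lintegral_lintegral_swap]
  · refine setLIntegral_congr_fun measurableSet_Ioo ?_
    intro t ht
    show (∫⁻ x in Ioo (0:ℝ) 1, (if t < x then h t * ENNReal.ofReal (yy x ^ σ * (2 / (1 - x ^ 2))) else 0)) = _
    rw [lint_ind' t ht (fun x => h t * ENNReal.ofReal (yy x ^ σ * (2 / (1 - x ^ 2)))),
      lintegral_const_mul _ (by fun_prop), ker_lint σ hσ ⟨ht.1.le, ht.2⟩]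
  · apply Measurable.aemeasurable
    refine Measurable.ite (measurableSet_lt measurable_snd measurable_fst) ?_ measurable_const
    fun_prop

lemma fub (h : ℝ → ENNReal) (hm : Measurable h) (s : ℂ) (hs : 0 < s.re)
    (hfin : ∫⁻ t in Ioo (0:ℝ) 1, h t * ENNReal.ofReal (yy t ^ s.re / s.re) ≠ ⊤)
    (hae : ∀ᵐ t ∂(volume.restrict (Ioo (0:ℝ) 1)), h t < ⊤) :
    ∫ x in Ioo (0:ℝ) 1, ((∫⁻ t in Ioo 0 x, h t).toReal : ℂ) * pc s x
    = (∫ t in Ioo (0:ℝ) 1, ((h t).toReal : ℂ) * (yy t : ℂ) ^ s) / s := by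
  have e1 : ∀ x ∈ Ioo (0:ℝ) 1,
      ((∫⁻ t in Ioo 0 x, h t).toReal : ℂ) * pc s x =
      ∫ t in Ioo (0:ℝ) 1, (if t < x then ((h t).toReal : ℂ) * pc s x else 0) := by
    intro x hx
    rw [int_ind x hx, integral_mul_const]
    congr 1
    rw [← integral_toReal hm.aemeasurable]
    · exact integral_ofReal.symm
    · exact ae_mono (Measure.restrict_mono (Ioo_subset_Ioo_right hx.2.le) le_rfl) hae
  rw [setIntegral_congr_fun measurableSet_Ioo e1, integral_integral_swap]
  · rw [← integral_div]
    refine setIntegral_congr_fun measurableSet_Ioo ?_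
    intro t ht
    show (∫ x in Ioo (0:ℝ) 1, (if t < x then ((h t).toReal : ℂ) * pc s x else 0)) = _
    rw [int_ind' t ht (fun x => ((h t).toReal : ℂ) * pc s x),
      integral_const_mul, ker_complex s hs ⟨ht.1.le, ht.2⟩, ← mul_div_assoc]
  · have hmeas : Measurable (Function.uncurry fun (x t : ℝ) =>
        (if t < x then ((h t).toReal : ℂ) * pc s x else 0)) := by
      refine Measurable.ite (measurableSet_lt measurable_snd measurable_fst) ?_ measurable_const
      fun_prop
    refine ⟨hmeas.aestronglyMeasurable, ?_⟩
    rw [hasFiniteIntegral_iff_enorm, lintegral_prod _ hmeas.enorm.aemeasurable]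
    refine lt_of_le_of_lt ?_ (lt_top_iff_ne_top.2 hfin)
    rw [← tonelli h hm s.re hs]
    refine setLIntegral_mono' measurableSet_Ioo ?_
    intro x hx
    rw [← lintegral_mul_const _ hm, ← lint_ind x hx]
    refine lintegral_mono ?_
    intro t
    simp only [Function.uncurry]
    split_ifs
    · rw [enorm_mul, enorm_pc s hx]
      gcongr
      rw [← ofReal_norm, Complex.norm_real, Real.norm_of_nonneg ENNReal.toReal_nonneg]
      exact ENNReal.ofReal_toReal_le
    · simp

end S3

namespace S3
open Set

noncomputable def kern : Bool → ℝ → ENNReal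
  | true, t => ENNReal.ofReal (2 / (1 - t ^ 2))
  | false, t => ENNReal.ofReal (1 / t)

@[fun_prop]
lemma meas_kern (b : Bool) : Measurable (kern b) := by
  cases b <;> (unfold kern; fun_prop)

lemma kern_lt_top (b : Bool) (t : ℝ) : kern b t < ⊤ := by
  cases b <;> exact ENNReal.ofReal_lt_top

noncomputable def Aw : List Bool → ℝ → ENNReal
  | [], x => ∫⁻ t in Ioo 0 x, kern true t
  | b :: v, x => ∫⁻ t in Ioo 0 x, Aw v t * kern b t

lemma mono_Aw (v : List Bool) : Monotone (Aw v) := by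
  intro x y h
  cases v <;> exact lintegral_mono_set (Ioo_subset_Ioo_right h)

@[fun_prop]
lemma meas_Aw (v : List Bool) : Measurable (Aw v) := (mono_Aw v).measurable

noncomputable def KE (v : List Bool) (σ : ℝ) : ENNReal :=
  ∫⁻ x in Ioo (0:ℝ) 1, Aw v x * ENNReal.ofReal (yy x ^ σ * (2 / (1 - x ^ 2)))

noncomputable def JE (v : List Bool) (σ : ℝ) : ENNReal :=
  ∫⁻ x in Ioo (0:ℝ) 1, Aw v x * ENNReal.ofReal (yy x ^ (σ - 1) / x)

lemma one_sub_yy {x : ℝ} (h : x ∈ Ioo (0:ℝ) 1) : 1 - yy x ^ 2 = 4 * x / (1 + x) ^ 2 := by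
  have : 1 + x ≠ 0 := by linarith [h.1]
  unfold yy
  field_simp
  ring

lemma geomR {x : ℝ} (h : x ∈ Ioo (0:ℝ) 1) (σ : ℝ) :
    HasSum (fun n : ℕ => 2 * (yy x ^ (σ + 2 * n) * (2 / (1 - x ^ 2)))) (yy x ^ (σ - 1) / x) := by
  have hy := yy_pos h
  have hy1 := yy_lt_one h
  have hg := hasSum_geometric_of_lt_one (r := yy x ^ 2) (by positivity) (by nlinarith)
  have := hg.mul_left (2 * (yy x ^ σ * (2 / (1 - x ^ 2))))
  convert this using 1
  · rfl
  · funext n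
    rw [Real.rpow_add hy]
    have : yy x ^ (2 * (n : ℝ)) = (yy x ^ 2) ^ n := by
      rw [← pow_mul, ← Real.rpow_natCast]; push_cast; rfl
    rw [this]; ring
  · rw [one_sub_yy h, Real.rpow_sub_one hy.ne']
    have h4 : 1 - x ^ 2 = (1 - x) * (1 + x) := by ring
    have h1 : (1 + x) ≠ 0 := by linarith [h.1]
    have h2 : (1 - x) ≠ 0 := by linarith [h.2]
    have h3 : x ≠ 0 := h.1.ne'
    rw [h4]
    simp only [yy]
    field_simp
    norm_num

noncomputable def pcJ (s : ℂ) (x : ℝ) : ℂ := (yy x : ℂ) ^ (s - 1) / x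

lemma geomC {x : ℝ} (h : x ∈ Ioo (0:ℝ) 1) (s : ℂ) :
    HasSum (fun n : ℕ => 2 * pc (s + 2 * n) x) (pcJ s x) := by
  have hy := yy_pos h
  have hy1 := yy_lt_one h
  have hyc : (yy x : ℂ) ≠ 0 := by exact_mod_cast hy.ne'
  have hg := geomR h 0
  have := (Complex.hasSum_ofReal.2 hg).mul_left ((yy x : ℂ) ^ s)
  convert this using 1
  · rfl
  · funext n
    have e : (yy x : ℂ) ^ (2 * (n : ℂ)) = ((yy x ^ (0 + 2 * (n : ℝ)) : ℝ) : ℂ) := by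
      rw [Complex.ofReal_cpow hy.le]; push_cast; simp
    rw [pc, Complex.cpow_add _ _ hyc, e]
    push_cast
    ring
  · rw [pcJ, Complex.cpow_sub _ _ hyc, Complex.cpow_one, Real.rpow_sub_one hy.ne']
    push_cast
    simp [div_eq_mul_inv]
    ring

lemma JE_eq (v : List Bool) (σ : ℝ) : JE v σ = ∑' n : ℕ, 2 * KE v (σ + 2 * n) := by
  have e1 : ∀ x ∈ Ioo (0:ℝ) 1, Aw v x * ENNReal.ofReal (yy x ^ (σ - 1) / x) =
      ∑' n : ℕ, 2 * (Aw v x * ENNReal.ofReal (yy x ^ (σ + 2 * n) * (2 / (1 - x ^ 2)))) := by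
    intro x hx
    have hy := yy_pos hx
    have := om_pos hx
    have hg := geomR hx σ
    rw [← hg.tsum_eq, ENNReal.ofReal_tsum_of_nonneg (fun n => by positivity) hg.summable,
      ← ENNReal.tsum_mul_left]
    congr 1
    funext n
    rw [ENNReal.ofReal_mul (by norm_num)]
    simp only [ENNReal.ofReal_ofNat]
    ring
  rw [JE, setLIntegral_congr_fun measurableSet_Ioo e1, lintegral_tsum (fun n => by fun_prop)]
  congr 1
  funext n
  rw [lintegral_const_mul _ (by fun_prop), KE]

lemma KE_nil (σ : ℝ) (hσ : 0 < σ) : KE [] σ = ENNReal.ofReal (1 / σ ^ 2) := by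
  simp only [KE, Aw]
  rw [tonelli (kern true) (by fun_prop) σ hσ]
  have e1 : ∀ t ∈ Ioo (0:ℝ) 1, kern true t * ENNReal.ofReal (yy t ^ σ / σ) =
      ENNReal.ofReal (1 / σ) * ENNReal.ofReal (yy t ^ σ * (2 / (1 - t ^ 2))) := by
    intro t ht
    have hy := yy_pos ht
    have := om_pos ht
    rw [kern, ← ENNReal.ofReal_mul (by positivity), ← ENNReal.ofReal_mul (by positivity)]
    congr 1; ring
  rw [setLIntegral_congr_fun measurableSet_Ioo e1, lintegral_const_mul _ (by fun_prop),
    ker_lint σ hσ (by simp), ← ENNReal.ofReal_mul (by positivity)]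
  congr 1
  simp [yy]
  ring

lemma KE_true (v : List Bool) (σ : ℝ) (hσ : 0 < σ) :
    KE (true :: v) σ = ENNReal.ofReal (1 / σ) * KE v σ := by
  simp only [KE, Aw]
  rw [tonelli (fun t => Aw v t * kern true t) (by fun_prop) σ hσ,
    ← lintegral_const_mul _ (by fun_prop)]
  refine setLIntegral_congr_fun measurableSet_Ioo ?_
  intro t ht
  have hy := yy_pos ht
  have := om_pos ht
  simp only [kern]
  rw [mul_assoc, ← ENNReal.ofReal_mul (by positivity), mul_left_comm,
    ← ENNReal.ofReal_mul (by positivity)]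
  congr 2; ring

lemma KE_false (v : List Bool) (σ : ℝ) (hσ : 0 < σ) :
    KE (false :: v) σ = ENNReal.ofReal (1 / σ) * JE v (σ + 1) := by
  simp only [KE, Aw, JE]
  rw [tonelli (fun t => Aw v t * kern false t) (by fun_prop) σ hσ,
    ← lintegral_const_mul _ (by fun_prop)]
  refine setLIntegral_congr_fun measurableSet_Ioo ?_
  intro t ht
  have hy := yy_pos ht
  have h0 := ht.1
  simp only [kern]
  rw [mul_assoc, ← ENNReal.ofReal_mul (by positivity), mul_left_comm,
    ← ENNReal.ofReal_mul (by positivity)]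
  congr 2
  rw [add_sub_cancel_right]; ring

lemma tele (σ : ℝ) (hσ : 0 < σ) :
    ∑' n : ℕ, ENNReal.ofReal (2 / (σ + 1 + 2 * n) ^ 2) ≤ ENNReal.ofReal (1 / σ) := by
  have h : ∀ m : ℕ, ∑ n ∈ Finset.range m, 2 / (σ + 1 + 2 * (n : ℝ)) ^ 2 ≤
      1 / σ - 1 / (σ + 2 * m) := by
    intro m
    induction m with
    | zero => simp
    | succ m ih =>
      rw [Finset.sum_range_succ]
      have : 2 / (σ + 1 + 2 * (m : ℝ)) ^ 2 ≤ 1 / (σ + 2 * m) - 1 / (σ + 2 * (m + 1 : ℕ)) := by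
        have h1 : 0 < σ + 2 * (m : ℝ) := by positivity
        push_cast
        rw [div_sub_div _ _ h1.ne' (by positivity), div_le_div_iff₀ (by positivity) (by positivity)]
        nlinarith
      linarith
  apply ENNReal.tsum_le_of_sum_range_le
  intro m
  rw [← ENNReal.ofReal_sum_of_nonneg (fun n _ => by positivity)]
  apply ENNReal.ofReal_le_ofReal
  have : 0 ≤ 1 / (σ + 2 * (m : ℝ)) := by positivity
  linarith [h m]

lemma JE_bound_aux (v : List Bool) (σ : ℝ) (hσ : 0 < σ) (C : ENNReal)
    (h : ∀ τ, σ + 1 ≤ τ → KE v τ ≤ C * ENNReal.ofReal (1 / τ ^ 2)) :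
    JE v (σ + 1) ≤ C * ENNReal.ofReal (1 / σ) := by
  rw [JE_eq]
  calc ∑' n : ℕ, 2 * KE v (σ + 1 + 2 * n)
      ≤ ∑' n : ℕ, C * ENNReal.ofReal (2 / (σ + 1 + 2 * n) ^ 2) := by
        apply ENNReal.tsum_le_tsum
        intro n
        have := h (σ + 1 + 2 * n) (by have : (0:ℝ) ≤ n := by positivity
                                      linarith)
        calc 2 * KE v (σ + 1 + 2 * n) ≤ 2 * (C * ENNReal.ofReal (1 / (σ + 1 + 2 * n) ^ 2)) := by gcongr
          _ = _ := by
            rw [mul_left_comm]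
            congr 1
            rw [show (2 : ENNReal) = ENNReal.ofReal 2 by simp, ← ENNReal.ofReal_mul (by norm_num)]
            congr 1; ring
    _ ≤ _ := by rw [ENNReal.tsum_mul_left]; gcongr; exact tele σ hσ

lemma KE_bound (v : List Bool) : ∀ δ : ℝ, 0 < δ → ∃ C : ENNReal, C ≠ ⊤ ∧
    ∀ σ, δ ≤ σ → KE v σ ≤ C * ENNReal.ofReal (1 / σ ^ 2) := by
  induction v with
  | nil =>
    intro δ hδ
    refine ⟨1, by simp, fun σ h => ?_⟩
    rw [KE_nil σ (hδ.trans_le h), one_mul]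
  | cons b v ih =>
    intro δ hδ
    obtain ⟨C, hC, h⟩ := ih δ hδ
    cases b
    · refine ⟨C, hC, fun σ hσ => ?_⟩
      have hσ0 := hδ.trans_le hσ
      rw [KE_false v σ hσ0]
      have := JE_bound_aux v σ hσ0 C (fun τ hτ => h τ (by linarith))
      calc _ ≤ ENNReal.ofReal (1 / σ) * (C * ENNReal.ofReal (1 / σ)) := by gcongr
        _ = _ := by
          rw [mul_left_comm, ← ENNReal.ofReal_mul (by positivity)]
          congr 2; ring
    · refine ⟨ENNReal.ofReal (1 / δ) * C, ENNReal.mul_ne_top (by simp) hC, fun σ hσ => ?_⟩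
      have hσ0 := hδ.trans_le hσ
      rw [KE_true v σ hσ0, mul_assoc]
      gcongr
      exact h σ hσ

lemma KE_ne_top (v : List Bool) (σ : ℝ) (hσ : 0 < σ) : KE v σ ≠ ⊤ := by
  obtain ⟨C, hC, h⟩ := KE_bound v σ hσ
  exact ((h σ le_rfl).trans_lt (ENNReal.mul_lt_top hC.lt_top (by simp))).ne

lemma JE_ne_top (v : List Bool) (σ : ℝ) (hσ : 0 < σ) : JE v σ ≠ ⊤ := by
  obtain ⟨C, hC, h⟩ := KE_bound v σ hσ
  have h2 := JE_bound_aux v (σ + 1) (by linarith) C (fun τ hτ => h τ (by linarith))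
  have h3 : JE v σ = 2 * KE v σ + JE v (σ + 1 + 1) := by
    rw [JE_eq, JE_eq, tsum_eq_zero_add' ENNReal.summable]
    congr 1
    · simp
    · congr 1; funext n; congr 2; push_cast; ring
  rw [h3]
  exact ENNReal.add_ne_top.2 ⟨ENNReal.mul_ne_top (by simp) (KE_ne_top v σ hσ),
    (h2.trans_lt (ENNReal.mul_lt_top hC.lt_top (by simp))).ne⟩

lemma Aw_ae (v : List Bool) : ∀ᵐ t ∂(volume.restrict (Ioo (0:ℝ) 1)), Aw v t < ⊤ := by
  have := ae_lt_top (by fun_prop) (KE_ne_top v 1 one_pos)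
  filter_upwards [this, ae_restrict_mem measurableSet_Ioo] with t h ht
  have hy := yy_pos ht
  have := om_pos ht
  by_contra hc
  rw [not_lt_top_iff] at hc
  rw [hc, ENNReal.top_mul] at h
  · simp at h
  · simp only [ne_eq, ENNReal.ofReal_eq_zero, not_le]; positivity

/-- ENNReal identities with TrE -/
lemma KE_JE_TrE (v : List Bool) : ∃ d L, dpl v = d :: L ∧
    ∀ σ : ℝ, 0 < σ → KE v σ = ENNReal.ofReal (1 / σ ^ d) * TrE L (σ + 1) := by
  induction v with
  | nil => exact ⟨2, [], rfl, fun σ hσ => by simp [KE_nil σ hσ, TrE]⟩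
  | cons b v ih =>
    obtain ⟨d, L, hd, h⟩ := ih
    cases b
    · refine ⟨1, d :: L, by simp [dpl, hd], fun σ hσ => ?_⟩
      rw [KE_false v σ hσ, JE_eq, TrE, pow_one]
      congr 1; congr 1; funext n
      rw [h _ (by positivity), ← mul_assoc]
      congr 1
      rw [show (2 : ENNReal) = ENNReal.ofReal 2 by simp, ← ENNReal.ofReal_mul (by norm_num)]
      congr 1; ring
    · refine ⟨d + 1, L, by simp [dpl, hd, plusOne], fun σ hσ => ?_⟩
      rw [KE_true v σ hσ, h σ hσ, ← mul_assoc, ← ENNReal.ofReal_mul (by positivity)]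
      congr 2; field_simp; ring

lemma TrE_ne_top (v : List Bool) (σ : ℝ) (hσ : 0 < σ) : TrE (dpl v) σ ≠ ⊤ := by
  obtain ⟨d, L, hd, h⟩ := KE_JE_TrE v
  have : TrE (dpl v) σ = JE v σ := by
    rw [hd, JE_eq, TrE]
    congr 1; funext n
    rw [h _ (by positivity), ← mul_assoc]
    congr 1
    rw [show (2 : ENNReal) = ENNReal.ofReal 2 by simp, ← ENNReal.ofReal_mul (by norm_num)]
    congr 1; ring
  rw [this]
  exact JE_ne_top v σ hσ

noncomputable def KC (v : List Bool) (s : ℂ) : ℂ :=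
  ∫ x in Ioo (0:ℝ) 1, ((Aw v x).toReal : ℂ) * pc s x

noncomputable def JC (v : List Bool) (s : ℂ) : ℂ :=
  ∫ x in Ioo (0:ℝ) 1, ((Aw v x).toReal : ℂ) * pcJ s x

lemma enorm_toReal_le (a : ENNReal) : ‖(a.toReal : ℂ)‖ₑ ≤ a := by
  rw [← ofReal_norm, Complex.norm_real, Real.norm_of_nonneg ENNReal.toReal_nonneg]
  exact ENNReal.ofReal_toReal_le

lemma JC_eq (v : List Bool) (s : ℂ) (hs : 0 < s.re) :
    JC v s = ∑' n : ℕ, 2 * KC v (s + 2 * n) := by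
  have e1 : ∀ x ∈ Ioo (0:ℝ) 1, ((Aw v x).toReal : ℂ) * pcJ s x =
      ∑' n : ℕ, 2 * (((Aw v x).toReal : ℂ) * pc (s + 2 * n) x) := by
    intro x hx
    rw [← (geomC hx s).tsum_eq, ← tsum_mul_left]
    congr 1; funext n; ring
  rw [JC, setIntegral_congr_fun measurableSet_Ioo e1, integral_tsum]
  · congr 1; funext n
    rw [integral_const_mul, KC]
  · intro n
    apply Measurable.aestronglyMeasurable
    fun_prop
  · refine ((ENNReal.tsum_le_tsum fun n => ?_).trans_lt
      (JE_eq v s.re ▸ JE_ne_top v s.re hs).lt_top).ne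
    rw [KE, ← lintegral_const_mul _ (by fun_prop)]
    refine setLIntegral_mono' measurableSet_Ioo ?_
    intro x hx
    rw [enorm_mul, enorm_mul, enorm_pc _ hx]
    have : (s + 2 * (n : ℂ)).re = s.re + 2 * n := by simp
    rw [this]
    have h2 : ‖(2 : ℂ)‖ₑ = 2 := by
      rw [← ofReal_norm]; simp
    rw [h2]
    gcongr
    exact enorm_toReal_le _

lemma KC_nil (s : ℂ) (hs : 0 < s.re) : KC [] s = s ^ (-(2 : ℤ)) := by
  have h := fub (kern true) (by fun_prop) s hs ?_ (Filter.Eventually.of_forall (kern_lt_top true))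
  · simp only [KC, Aw]
    rw [h]
    have e1 : ∀ t ∈ Ioo (0:ℝ) 1, ((kern true t).toReal : ℂ) * (yy t : ℂ) ^ s = pc s t := by
      intro t ht
      have := om_pos ht
      rw [kern, ENNReal.toReal_ofReal (by positivity), pc, mul_comm]
    rw [setIntegral_congr_fun measurableSet_Ioo e1, ker_complex s hs (by simp)]
    simp [yy, zpow_neg, zpow_ofNat, sq, div_eq_mul_inv]
  · rw [← tonelli (kern true) (by fun_prop) s.re hs]
    exact KE_ne_top [] s.re hs

lemma KC_cons (b : Bool) (v : List Bool) (s : ℂ) (hs : 0 < s.re) :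
    KC (b :: v) s =
      (∫ t in Ioo (0:ℝ) 1, ((Aw v t).toReal : ℂ) * ((kern b t).toReal : ℂ) * (yy t : ℂ) ^ s) / s := by
  have h := fub (fun t => Aw v t * kern b t) (by fun_prop) s hs ?_ ?_
  · simp only [KC, Aw]
    rw [h]
    simp only [ENNReal.toReal_mul, Complex.ofReal_mul]
  · rw [← tonelli _ (by fun_prop) s.re hs]
    exact KE_ne_top (b :: v) s.re hs
  · filter_upwards [Aw_ae v] with t ht
    exact ENNReal.mul_lt_top ht (kern_lt_top b t)

lemma KC_true (v : List Bool) (s : ℂ) (hs : 0 < s.re) : KC (true :: v) s = KC v s / s := by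
  rw [KC_cons _ _ _ hs, KC]
  congr 1
  refine setIntegral_congr_fun measurableSet_Ioo ?_
  intro t ht
  have := om_pos ht
  simp only [kern]
  rw [ENNReal.toReal_ofReal (by positivity), pc]
  ring

lemma KC_false (v : List Bool) (s : ℂ) (hs : 0 < s.re) :
    KC (false :: v) s = JC v (s + 1) / s := by
  rw [KC_cons _ _ _ hs, JC]
  congr 1
  refine setIntegral_congr_fun measurableSet_Ioo ?_
  intro t ht
  have := ht.1
  simp only [kern]
  rw [ENNReal.toReal_ofReal (by positivity), pcJ, add_sub_cancel_right]
  push_cast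
  ring

lemma KC_Tr (v : List Bool) : ∃ d L, dpl v = d :: L ∧
    ∀ s : ℂ, 0 < s.re → KC v s = s ^ (-(d : ℤ)) * Tr L (s + 1) := by
  induction v with
  | nil => exact ⟨2, [], rfl, fun s hs => by simp [KC_nil s hs, Tr]⟩
  | cons b v ih =>
    obtain ⟨d, L, hd, h⟩ := ih
    cases b
    · refine ⟨1, d :: L, by simp [dpl, hd], fun s hs => ?_⟩
      rw [KC_false v s hs, JC_eq _ _ (by simp; positivity), Tr, div_eq_inv_mul]
      simp only [Nat.cast_one, zpow_neg_one]
      congr 1; congr 1; funext n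
      rw [h _ (by simp; positivity), ← mul_assoc]
    · refine ⟨d + 1, L, by simp [dpl, hd, plusOne], fun s hs => ?_⟩
      have hs0 : s ≠ 0 := by rintro rfl; simp at hs
      rw [KC_true v s hs, h s hs]
      push_cast
      rw [neg_add, zpow_add₀ hs0, zpow_neg_one]
      ring

lemma JC_Tr (v : List Bool) (s : ℂ) (hs : 0 < s.re) : JC v s = Tr (dpl v) s := by
  obtain ⟨d, L, hd, h⟩ := KC_Tr v
  rw [hd, JC_eq v s hs, Tr]
  congr 1; funext n
  rw [h _ (by simp; positivity), ← mul_assoc]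

lemma JC_HMTV (k : List ℕ) (s : ℂ) (hs : 0 < s.re) :
    JC (toWord k) s = HMTV (plusOne (HDual k.reverse)) s := by
  rw [plusOne_HDual, HMTV_reverse _ s hs (TrE_ne_top _ _ hs), JC_Tr _ s hs]

end S3

namespace S3
open Set

abbrev Sa (r : ℕ) := {n : Fin r → ℕ //
  StrictAnti n ∧ (∀ i, 0 < n i) ∧ ∀ i, n i % 2 = (r - i.val) % 2}

def lead : (r : ℕ) → (Fin r → ℕ) → ℕ
  | 0, _ => 0
  | _ + 1, n => n 0

noncomputable def cf (k : List ℕ) (n : Fin k.length → ℕ) : ℝ :=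
  2 ^ k.length / ∏ i, (n i : ℝ) ^ k.get i

noncomputable def EA (k : List ℕ) (x : ℝ) : ENNReal :=
  ∑' n : Sa k.length, ENNReal.ofReal (cf k n.1 * x ^ lead k.length n.1)

lemma cf_nonneg (k : List ℕ) (n : Fin k.length → ℕ) : 0 ≤ cf k n := by
  unfold cf; positivity

lemma AFn_eq (k : List ℕ) (hk : k ≠ []) (x : ℝ) (hx : 0 ≤ x) : AFn k x = (EA k x).toReal := by
  obtain ⟨a, k, rfl⟩ := List.exists_cons_of_ne_nil hk
  rw [EA, ENNReal.tsum_toReal_eq (fun n => ENNReal.ofReal_ne_top)]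
  rw [AFn, dif_pos (by simp), ← tsum_mul_left]
  congr 1
  funext n
  rw [ENNReal.toReal_ofReal (mul_nonneg (cf_nonneg _ _) (by positivity)), cf]
  show _ = _ * x ^ (n.1 0)
  rw [div_mul_eq_mul_div, mul_div_assoc]
  rfl

lemma lead_lt {r : ℕ} (n : Fin (r + 1) → ℕ) (h : StrictAnti n) (hp : ∀ i, 0 < n i) :
    lead r (fun i => n i.succ) < n 0 := by
  cases r with
  | zero => exact hp 0
  | succ r => exact h (Fin.succ_pos 0)

lemma lead_par (r : ℕ) (n : Sa r) : lead r n.1 % 2 = r % 2 := by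
  cases r with
  | zero => rfl
  | succ r => simpa [lead] using n.2.2.2 0

lemma le_lead (r : ℕ) (n : Sa r) (i : Fin r) : n.1 i ≤ lead r n.1 := by
  cases r with
  | zero => exact i.elim0
  | succ r => exact n.2.1.antitone (Fin.zero_le i)

def peelA (r : ℕ) : Sa r × ℕ ≃ Sa (r + 1) where
  toFun p := ⟨Fin.cons (α := fun _ => ℕ) (lead r p.1.1 + 1 + 2 * p.2) p.1.1, by
    obtain ⟨n, j⟩ := p
    have hl := lead_par r n
    refine ⟨?_, ?_, ?_⟩
    · intro a b hab
      induction b using Fin.cases with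
      | zero => simp at hab
      | succ b =>
        induction a using Fin.cases with
        | zero =>
          simp only [Fin.cons_zero, Fin.cons_succ]
          have := le_lead r n b
          omega
        | succ a =>
          simp only [Fin.cons_succ]
          exact n.2.1 (Fin.succ_lt_succ_iff.1 hab)
    · intro i
      induction i using Fin.cases with
      | zero => simp
      | succ i => simpa using n.2.2.1 i
    · intro i
      induction i using Fin.cases with
      | zero => simp; omega
      | succ i => simpa using n.2.2.2 i⟩
  invFun n := (⟨fun i => n.1 i.succ, by
    refine ⟨fun a b hab => n.2.1 (Fin.succ_lt_succ_iff.2 hab), fun i => n.2.2.1 _, fun i => ?_⟩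
    have := n.2.2.2 i.succ
    simpa using this⟩, (n.1 0 - lead r (fun i => n.1 i.succ) - 1) / 2)
  left_inv p := by
    obtain ⟨n, j⟩ := p
    ext
    · simp
    · have : (lead r fun i => n.1 i) = lead r n.1 := rfl
      simp [this]; omega
  right_inv n := by
    apply Subtype.ext
    funext i
    induction i using Fin.cases with
    | zero =>
      have h1 := lead_lt n.1 n.2.1 n.2.2.1
      have h2 := n.2.2.2 0
      have h3 := lead_par r ⟨fun i => n.1 i.succ, by
        refine ⟨fun a b hab => n.2.1 (Fin.succ_lt_succ_iff.2 hab), fun i => n.2.2.1 _, fun i => ?_⟩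
        have := n.2.2.2 i.succ
        simpa using this⟩
      simp at h2 h3 ⊢
      omega
    | succ i => simp

lemma cf_cons (a : ℕ) (k : List ℕ) (p : Sa k.length × ℕ) :
    cf (a :: k) (peelA k.length p).1 =
      cf k p.1.1 * (2 / ((lead k.length p.1.1 + 1 + 2 * p.2 : ℕ) : ℝ) ^ a) := by
  unfold cf
  simp only [List.length_cons]
  rw [Fin.prod_univ_succ]
  simp only [peelA, Equiv.coe_fn_mk, Fin.cons_zero, Fin.cons_succ, List.get_cons_zero,
    List.get_cons_succ']
  rw [pow_succ, div_mul_div_comm]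
  congr 1
  rw [mul_comm]

lemma EA_cons (a : ℕ) (k : List ℕ) (x : ℝ) :
    EA (a :: k) x = ∑' p : Sa k.length × ℕ, ENNReal.ofReal (cf k p.1.1 *
      (2 / ((lead k.length p.1.1 + 1 + 2 * p.2 : ℕ) : ℝ) ^ a) *
        x ^ (lead k.length p.1.1 + 1 + 2 * p.2)) := by
  refine ((peelA k.length).tsum_eq
    (fun n => ENNReal.ofReal (cf (a :: k) n.1 * x ^ lead (k.length + 1) n.1))).symm.trans ?_
  congr 1
  funext p
  rw [cf_cons]
  rfl

lemma lint_pow (c : ℝ) (hc : 0 ≤ c) (N : ℕ) (x : ℝ) (hx : 0 ≤ x) :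
    ∫⁻ t in Ioo 0 x, ENNReal.ofReal (c * t ^ N) = ENNReal.ofReal (c / (N + 1 : ℕ) * x ^ (N + 1)) := by
  rw [← ofReal_integral_eq_lintegral_ofReal]
  · congr 1
    rw [← integral_Ioc_eq_integral_Ioo, ← intervalIntegral.integral_of_le hx,
      intervalIntegral.integral_const_mul, integral_pow]
    push_cast
    simp
    ring
  · have : Continuous fun t : ℝ => c * t ^ N := by fun_prop
    exact (this.integrableOn_Icc).mono_set Ioo_subset_Icc_self
  · filter_upwards [ae_restrict_mem measurableSet_Ioo] with t ht
    have := ht.1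
    show 0 ≤ _
    positivity

lemma EA_step_false (a : ℕ) (k : List ℕ) (x : ℝ) (hx : x ∈ Ioo (0:ℝ) 1) :
    EA ((a + 1) :: k) x = ∫⁻ t in Ioo 0 x, EA (a :: k) t * kern false t := by
  have e : ∀ t ∈ Ioo 0 x, EA (a :: k) t * kern false t =
      ∑' p : Sa k.length × ℕ, ENNReal.ofReal (cf k p.1.1 *
      (2 / ((lead k.length p.1.1 + 1 + 2 * p.2 : ℕ) : ℝ) ^ a) *
        t ^ (lead k.length p.1.1 + 2 * p.2)) := by
    intro t ht
    have ht0 := ht.1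
    rw [EA_cons, ← ENNReal.tsum_mul_right]
    congr 1; funext p
    have := cf_nonneg k p.1.1
    rw [kern, ← ENNReal.ofReal_mul (by positivity)]
    congr 1
    rw [show lead k.length p.1.1 + 1 + 2 * p.2 = lead k.length p.1.1 + 2 * p.2 + 1 by ring, pow_succ]
    field_simp
  rw [setLIntegral_congr_fun measurableSet_Ioo e, lintegral_tsum (fun p => by fun_prop), EA_cons]
  congr 1; funext p
  have := cf_nonneg k p.1.1
  rw [lint_pow _ (by positivity) _ _ hx.1.le]
  congr 1
  rw [show lead k.length p.1.1 + 1 + 2 * p.2 = lead k.length p.1.1 + 2 * p.2 + 1 by ring, pow_succ]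
  field_simp

lemma EA_step_true (k : List ℕ) (x : ℝ) (hx : x ∈ Ioo (0:ℝ) 1) :
    EA (1 :: k) x = ∫⁻ t in Ioo 0 x, EA k t * kern true t := by
  have e : ∀ t ∈ Ioo 0 x, EA k t * kern true t =
      ∑' p : Sa k.length × ℕ, ENNReal.ofReal (cf k p.1.1 * 2 *
        t ^ (lead k.length p.1.1 + 2 * p.2)) := by
    intro t ht
    have ht0 := ht.1
    have ht1 : t < 1 := ht.2.trans hx.2
    rw [ENNReal.summable.tsum_prod' (fun _ => ENNReal.summable), EA, ← ENNReal.tsum_mul_right]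
    congr 1; funext n
    have hg := (hasSum_geometric_of_lt_one (r := t ^ 2) (by positivity) (by nlinarith)).mul_left
      (cf k n.1 * 2 * t ^ lead k.length n.1)
    have := cf_nonneg k n.1
    have e2 : ∀ j : ℕ, cf k n.1 * 2 * t ^ (lead k.length n.1 + 2 * j) =
      cf k n.1 * 2 * t ^ lead k.length n.1 * (t ^ 2) ^ j := by
      intro j; rw [pow_add, pow_mul]; ring
    simp only [e2]
    rw [← ENNReal.ofReal_tsum_of_nonneg (fun j => by positivity) hg.summable, hg.tsum_eq, kern,
      ← ENNReal.ofReal_mul (by positivity)]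
    congr 1
    ring
  rw [setLIntegral_congr_fun measurableSet_Ioo e, lintegral_tsum (fun p => by fun_prop), EA_cons]
  congr 1; funext p
  have := cf_nonneg k p.1.1
  rw [lint_pow _ (by positivity) _ _ hx.1.le]
  congr 1
  rw [show lead k.length p.1.1 + 1 + 2 * p.2 = lead k.length p.1.1 + 2 * p.2 + 1 by ring, pow_one]
  ring

lemma EA_nil (x : ℝ) : EA [] x = 1 := by
  have : Unique (Sa ([] : List ℕ).length) :=
    ⟨⟨⟨Fin.elim0, fun i => i.elim0, fun i => i.elim0, fun i => i.elim0⟩⟩,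
      fun n => Subtype.ext (funext fun i => i.elim0)⟩
  rw [EA, tsum_eq_single default (by intro b hb; exact absurd (Unique.eq_default b) hb)]
  simp [cf, lead]

lemma toWord_succ (a : ℕ) (k : List ℕ) : toWord ((a + 2) :: k) = false :: toWord ((a + 1) :: k) := by
  cases k <;> simp [toWord, List.replicate_succ]

lemma EA_Aw (k : List ℕ) : k ≠ [] → (∀ a ∈ k, 0 < a) → ∀ x ∈ Ioo (0:ℝ) 1,
    EA k x = Aw (toWord k) x := by
  induction k with
  | nil => simp
  | cons a k ih =>
    intro _ hpos
    have ha : 0 < a := hpos a (by simp)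
    obtain ⟨a, rfl⟩ : ∃ b, a = b + 1 := ⟨a - 1, by omega⟩
    clear ha
    have hpos' : ∀ b ∈ k, 0 < b := fun b hb => hpos b (by simp [hb])
    clear hpos
    induction a with
    | zero =>
      intro x hx
      rw [zero_add, EA_step_true k x hx]
      cases k with
      | nil => simp [EA_nil, toWord, Aw]
      | cons b k =>
        have : toWord (1 :: b :: k) = true :: toWord (b :: k) := by simp [toWord]
        rw [this, Aw]
        refine setLIntegral_congr_fun measurableSet_Ioo ?_
        intro t ht
        simp only
        rw [ih (by simp) hpos' t ⟨ht.1, ht.2.trans hx.2⟩]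
    | succ a iha =>
      intro x hx
      rw [EA_step_false _ k x hx, toWord_succ, Aw]
      refine setLIntegral_congr_fun measurableSet_Ioo ?_
      intro t ht
      simp only
      rw [iha (by simp) t ⟨ht.1, ht.2.trans hx.2⟩]

end S3

theorem stmt3 (k : List ℕ) (hk : k ≠ []) (hkpos : ∀ a ∈ k, 0 < a)
    (α : ℂ) (hα : ∀ j : ℕ, 0 < j → α ≠ (j : ℂ)) (hre : α.re < 1) :
    (∫ x in (0:ℝ)..1,
        ((AFn k x : ℝ) : ℂ) / ((x : ℂ) * (((1 - x) / (1 + x) : ℝ) : ℂ) ^ α)) =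
      HMTV (plusOne (HDual k.reverse)) (1 - α) := by
  rw [← S3.JC_HMTV k (1 - α) (by simpa using hre), intervalIntegral.integral_of_le zero_le_one,
    integral_Ioc_eq_integral_Ioo, S3.JC]
  refine setIntegral_congr_fun measurableSet_Ioo ?_
  intro x hx
  simp only
  rw [S3.AFn_eq k hk x hx.1.le, S3.EA_Aw k hk hkpos x hx, S3.pcJ,
    show (1 - α - 1) = -α by ring, Complex.cpow_neg, S3.yy]
  simp only [div_eq_mul_inv, mul_inv]
  ring
end
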